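/- arXiv:1206.1100 — 2 statements merged into one kernel-verified Lean document; each statement's English description precedes it below -/
import Mathlib

section
/- For every integer a ≥ 1 and every real y > √D/(2a), one has ∫_{−∞}^{∞} (a(w+iy)² − D/(4a))^{k−1} · φ( arctan( √D·y / (a(w²+y²) − D/(4a)) ) ) dw = (−1)^{k+1} · D^{k−1/2} · π / (a^k · 2^{2k−2} · (2k−1)). -/
noncomputable section

open MeasureTheory

/-- The set of integral binary quadratic forms `[a,b,c]` of discriminant `D`. -/
def QD (D : ℤ) : Set (ℤ × ℤ × ℤ) := {q | q.2.1 ^ 2 - 4 * q.1 * q.2.2 = D}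

/-- `Q(τ,1) = a τ² + b τ + c`. -/
def Qval (q : ℤ × ℤ × ℤ) (τ : ℂ) : ℂ :=
  (q.1 : ℂ) * τ ^ 2 + (q.2.1 : ℂ) * τ + (q.2.2 : ℂ)

/-- `a|τ|² + b x + c` where `τ = x + iy`. -/
def Qell (q : ℤ × ℤ × ℤ) (τ : ℂ) : ℝ :=
  (q.1 : ℝ) * Complex.normSq τ + (q.2.1 : ℝ) * τ.re + (q.2.2 : ℝ)

/-- `ψ(v) = (1/2) ∫₀ᵛ u^(k-3/2) (1-u)^(-1/2) du`. -/
def psi (k : ℕ) (v : ℝ) : ℝ :=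
  (1 / 2) * ∫ u in (0:ℝ)..v, u ^ ((k : ℝ) - 3 / 2) * (1 - u) ^ (-(1:ℝ) / 2)

/-- real power of the integer `D`, as a complex number. -/
def Dpow (D : ℤ) (e : ℝ) : ℂ := (((D : ℝ) ^ e : ℝ) : ℂ)

/-- The summand of the series defining `F_{1-k,D}`. -/
def Fsummand (k : ℕ) (D : ℤ) (τ : ℂ) (q : ℤ × ℤ × ℤ) : ℂ :=
  ((Real.sign (Qell q τ) : ℝ) : ℂ) * Qval q τ ^ (k - 1) *
    ((psi k ((D : ℝ) * τ.im ^ 2 / Complex.normSq (Qval q τ)) : ℝ) : ℂ)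

/-- `F_{1-k,D}`. -/
def F (k : ℕ) (D : ℤ) (τ : ℂ) : ℂ :=
  (Dpow D (1 / 2 - (k : ℝ)) / (((Nat.choose (2 * k - 2) (k - 1) : ℝ) * Real.pi : ℝ) : ℂ)) *
    ∑' q : QD D, Fsummand k D τ (q : ℤ × ℤ × ℤ)

/-- `f_{k,D}`. -/
def fkD (k : ℕ) (D : ℤ) (τ : ℂ) : ℂ :=
  (Dpow D ((k : ℝ) - 1 / 2) / (((Nat.choose (2 * k - 2) (k - 1) : ℝ) * Real.pi : ℝ) : ℂ)) *
    ∑' q : QD D, Qval (q : ℤ × ℤ × ℤ) τ ^ (-(k : ℤ))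

/-- Action of `SL₂(ℤ)` on binary quadratic forms: `(Q ∘ γ)(X,Y) = Q(pX+qY, rX+sY)`. -/
def QAct (q : ℤ × ℤ × ℤ) (γ : Matrix.SpecialLinearGroup (Fin 2) ℤ) : ℤ × ℤ × ℤ :=
  (q.1 * (γ.1 0 0) ^ 2 + q.2.1 * (γ.1 0 0) * (γ.1 1 0) + q.2.2 * (γ.1 1 0) ^ 2,
   2 * q.1 * (γ.1 0 0) * (γ.1 0 1) + q.2.1 * ((γ.1 0 0) * (γ.1 1 1) + (γ.1 0 1) * (γ.1 1 0))
     + 2 * q.2.2 * (γ.1 1 0) * (γ.1 1 1),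
   q.1 * (γ.1 0 1) ^ 2 + q.2.1 * (γ.1 0 1) * (γ.1 1 1) + q.2.2 * (γ.1 1 1) ^ 2)

/-- A narrow class: an orbit of the `SL₂(ℤ)`-action on `QD D`. -/
def IsNarrowClass (D : ℤ) (𝒜 : Set (ℤ × ℤ × ℤ)) : Prop :=
  ∃ q₀ ∈ QD D, 𝒜 = {q | ∃ γ : Matrix.SpecialLinearGroup (Fin 2) ℤ, QAct q₀ γ = q}

/-- `F_{1-k,D,𝒜}`. -/
def FA (k : ℕ) (D : ℤ) (𝒜 : Set (ℤ × ℤ × ℤ)) (τ : ℂ) : ℂ :=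
  ((-1 : ℂ) ^ k * Dpow D (1 / 2 - (k : ℝ)) /
      (((Nat.choose (2 * k - 2) (k - 1) : ℝ) * Real.pi : ℝ) : ℂ)) *
    ∑' q : 𝒜, Fsummand k D τ (q : ℤ × ℤ × ℤ)

/-- `f_{k,D,𝒜}`. -/
def fA (k : ℕ) (D : ℤ) (𝒜 : Set (ℤ × ℤ × ℤ)) (τ : ℂ) : ℂ :=
  ((-1 : ℂ) ^ k * Dpow D ((k : ℝ) - 1 / 2) /
      (((Nat.choose (2 * k - 2) (k - 1) : ℝ) * Real.pi : ℝ) : ℂ)) *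
    ∑' q : 𝒜, Qval (q : ℤ × ℤ × ℤ) τ ^ (-(k : ℤ))

/-- Partial derivative in the real direction `x`. -/
def dxx (G : ℂ → ℂ) (τ : ℂ) : ℂ :=
  deriv (fun x : ℝ => G ((x : ℂ) + (τ.im : ℂ) * Complex.I)) τ.re

/-- Partial derivative in the imaginary direction `y`. -/
def dyy (G : ℂ → ℂ) (τ : ℂ) : ℂ :=
  deriv (fun y : ℝ => G ((τ.re : ℂ) + (y : ℂ) * Complex.I)) τ.im

/-- Wirtinger derivative `∂/∂τ̄ = (1/2)(∂/∂x + i ∂/∂y)`. -/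
def wirDbar (G : ℂ → ℂ) (τ : ℂ) : ℂ := (dxx G τ + Complex.I * dyy G τ) / 2

/-- Wirtinger derivative `∂/∂τ = (1/2)(∂/∂x - i ∂/∂y)`. -/
def wirD (G : ℂ → ℂ) (τ : ℂ) : ℂ := (dxx G τ - Complex.I * dyy G τ) / 2

/-- The operator `ξ_{2-2k}(G)(τ) = 2 i y^{2-2k} conj(∂G/∂τ̄)`. -/
def xiOp (k : ℕ) (G : ℂ → ℂ) (τ : ℂ) : ℂ :=
  2 * Complex.I * (τ.im : ℂ) ^ ((2 : ℤ) - 2 * (k : ℤ)) * (starRingEnd ℂ) (wirDbar G τ)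

/-- The operator `𝒟 = (1/(2πi)) ∂/∂τ`. -/
def Dop (G : ℂ → ℂ) : ℂ → ℂ := fun τ => (1 / (2 * (Real.pi : ℂ) * Complex.I)) * wirD G τ

/-- The weight `2-2k` hyperbolic Laplacian. -/
def DeltaOp (k : ℕ) (G : ℂ → ℂ) (τ : ℂ) : ℂ :=
  -(τ.im : ℂ) ^ 2 * (dxx (fun z => dxx G z) τ + dyy (fun z => dyy G z) τ)
    + Complex.I * ((2 : ℂ) - 2 * (k : ℂ)) * (τ.im : ℂ) * (dxx G τ + Complex.I * dyy G τ)

/-- `φ(v) = ∫₀ᵛ sin(u)^{2k-2} du`. -/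
def phi (k : ℕ) (v : ℝ) : ℝ := ∫ u in (0:ℝ)..v, Real.sin u ^ (2 * k - 2)

/-- `φ̂(τ) = τ^{k-1} sgn(x) φ(arctan|y/x|)`, with value `0` when `x = 0`. -/
def phiHat (k : ℕ) (τ : ℂ) : ℂ :=
  τ ^ (k - 1) * ((Real.sign τ.re : ℝ) : ℂ) *
    ((phi k (Real.arctan |τ.im / τ.re|) : ℝ) : ℂ)

/-- The non-holomorphic Eichler integral
`f^*(τ) = (2i)^{1-2k} ∫_{-τ̄}^{i∞} conj(f(-z̄)) (z+τ)^{2k-2} dz`,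
parametrized along the vertical path `z = -τ̄ + it`, `t ∈ (0,∞)`. -/
def fstar (k : ℕ) (f : ℂ → ℂ) (τ : ℂ) : ℂ :=
  (2 * Complex.I) ^ ((1 : ℤ) - 2 * (k : ℤ)) * Complex.I *
    ∫ t in Set.Ioi (0 : ℝ), (starRingEnd ℂ) (f (τ + (t : ℂ) * Complex.I)) *
      (((2 * τ.im + t : ℝ) : ℂ) * Complex.I) ^ (2 * k - 2)

/-- `a : ℕ → ℂ` is the sequence of Fourier coefficients of `f` (with `a n` the
coefficient of `e^{2πi(n+1)τ}`). -/
def HasFourier (a : ℕ → ℂ) (f : ℂ → ℂ) : Prop :=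
  ∀ τ : ℂ, 0 < τ.im →
    f τ = ∑' n : ℕ, a n * Complex.exp (2 * (Real.pi : ℂ) * Complex.I * ((n : ℂ) + 1) * τ)

/-- The holomorphic Eichler integral `ℰ_f(τ) = ∑_{n≥1} (a_n/n^{2k-1}) e^{2πinτ}`. -/
def EichlerE (k : ℕ) (a : ℕ → ℂ) (τ : ℂ) : ℂ :=
  ∑' n : ℕ, a n / ((n : ℂ) + 1) ^ (2 * k - 1) *
    Complex.exp (2 * (Real.pi : ℂ) * Complex.I * ((n : ℂ) + 1) * τ)

/-- `r_{a,b}(𝒜) = 1_{[Q_{a,b} ∈ 𝒜]} + (-1)^k 1_{[-Q_{a,b} ∈ 𝒜]}`. -/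
def rab (k : ℕ) (D : ℤ) (𝒜 : Set (ℤ × ℤ × ℤ)) (a b : ℤ) : ℝ :=
  Set.indicator 𝒜 1 (a, b, (b ^ 2 - D) / (4 * a)) +
    (-1 : ℝ) ^ k * Set.indicator 𝒜 1 (-a, -b, -((b ^ 2 - D) / (4 * a)))

/-- The constant `c_∞(𝒜)`. -/
def cInftyA (k : ℕ) (D : ℤ) (𝒜 : Set (ℤ × ℤ × ℤ)) : ℝ :=
  -(1 / (2 ^ (2 * k - 2) * (2 * (k : ℝ) - 1) * (Nat.choose (2 * k - 2) (k - 1) : ℝ))) *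
    ∑' n : ℕ, (1 / ((n : ℝ) + 1) ^ k) *
      ∑ b ∈ Finset.range (2 * (n + 1)),
        if (4 * ((n : ℤ) + 1)) ∣ ((b : ℤ) ^ 2 - D) then rab k D 𝒜 ((n : ℤ) + 1) (b : ℤ) else 0

/-- The constant `c_∞`. -/
def cInfty (k : ℕ) (D : ℤ) : ℝ :=
  -(1 / (2 ^ (2 * k - 3) * (2 * (k : ℝ) - 1) * (Nat.choose (2 * k - 2) (k - 1) : ℝ))) *
    ∑' n : ℕ, (1 / ((n : ℝ) + 1) ^ k) *
      (((Finset.range (2 * (n + 1))).filter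
        (fun b : ℕ => (4 * ((n : ℤ) + 1)) ∣ ((b : ℤ) ^ 2 - D))).card : ℝ)

/-- The weight `2-2k` Hecke operator `T_p`. -/
def heckeT (k : ℕ) (p : ℕ) (g : ℂ → ℂ) (τ : ℂ) : ℂ :=
  (p : ℂ) ^ ((1 : ℤ) - 2 * (k : ℤ)) * g ((p : ℂ) * τ) +
    (p : ℂ)⁻¹ * ∑ r ∈ Finset.range p, g ((τ + (r : ℂ)) / (p : ℂ))

open scoped Classical in
/-- The symbol `(D|p)`. -/
def legSym (D : ℤ) (p : ℕ) : ℤ :=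
  if (p : ℤ) ∣ D then 0
  else if p = 2 then (if D % 8 = 1 ∨ D % 8 = 7 then 1 else -1)
  else if ∃ m : ℤ, (p : ℤ) ∣ (m ^ 2 - D) then 1 else -1

/-- Primitive forms of discriminant `D`. -/
def QDprim (D : ℤ) : Set (ℤ × ℤ × ℤ) :=
  {q | q.2.1 ^ 2 - 4 * q.1 * q.2.2 = D ∧ Int.gcd q.1 (Int.gcd q.2.1 q.2.2) = 1}

/-- `F'_{1-k,D}`: the sum over primitive forms, with normalization `D^{(1-k)/2}`. -/
def Fprim (k : ℕ) (D : ℤ) (τ : ℂ) : ℂ :=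
  (Dpow D ((1 - (k : ℝ)) / 2) / (((Nat.choose (2 * k - 2) (k - 1) : ℝ) * Real.pi : ℝ) : ℂ)) *
    ∑' q : QDprim D, Fsummand k D τ (q : ℤ × ℤ × ℤ)

/-- The root `η_Q = (-b+√D)/(2a)`. -/
def etaQ (D : ℤ) (q : ℤ × ℤ × ℤ) : ℝ := (-(q.2.1 : ℝ) + Real.sqrt (D : ℝ)) / (2 * (q.1 : ℝ))

/-- The root `η'_Q = (-b-√D)/(2a)`. -/
def etaQ' (D : ℤ) (q : ℤ × ℤ × ℤ) : ℝ := (-(q.2.1 : ℝ) - Real.sqrt (D : ℝ)) / (2 * (q.1 : ℝ))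

/-- The scaling matrix `A_Q`. -/
def AQ (D : ℤ) (q : ℤ × ℤ × ℤ) : Matrix (Fin 2) (Fin 2) ℝ :=
  (1 / Real.sqrt |etaQ D q - etaQ' D q|) •
    !![1, -(etaQ' D q);
       -(Real.sign (etaQ D q - etaQ' D q)), Real.sign (etaQ D q - etaQ' D q) * etaQ D q]

/-- Real matrix associated to an element of `SL₂(ℤ)`. -/
def toR (γ : Matrix.SpecialLinearGroup (Fin 2) ℤ) : Matrix (Fin 2) (Fin 2) ℝ :=
  γ.1.map (fun n => (n : ℝ))

/-- Möbius action of a real `2×2` matrix on `ℂ`. -/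
def moeb (g : Matrix (Fin 2) (Fin 2) ℝ) (τ : ℂ) : ℂ :=
  ((g 0 0 : ℝ) * τ + (g 0 1 : ℝ)) / ((g 1 0 : ℝ) * τ + (g 1 1 : ℝ))

/-- Automorphy factor `j(g,τ) = cτ + d`. -/
def jfac (g : Matrix (Fin 2) (Fin 2) ℝ) (τ : ℂ) : ℂ :=
  ((g 1 0 : ℝ) : ℂ) * τ + ((g 1 1 : ℝ) : ℂ)

/-- `n`-th period `r_n(f) = ∫₀^∞ f(it) tⁿ dt`. -/
def periodR (f : ℂ → ℂ) (n : ℕ) : ℂ :=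
  ∫ t in Set.Ioi (0 : ℝ), f ((t : ℂ) * Complex.I) * (t : ℂ) ^ n

/-- The even period polynomial `r⁺(f;X)`. -/
def rPlus (k : ℕ) (f : ℂ → ℂ) : Polynomial ℂ :=
  ∑ m ∈ Finset.range k,
    Polynomial.C ((-1 : ℂ) ^ m * (Nat.choose (2 * k - 2) (2 * m) : ℂ) * periodR f (2 * m)) *
      Polynomial.X ^ (2 * k - 2 - 2 * m)

end

/-! Scaling reduces everything to the line `τ = x + i` and to `I_m = ∫ (τ² - s²)^m φ_{m+1}(θ) dx`,
where `φ_k = phi k` and `θ = arctan (x + s) - arctan (x - s)` is the angle under which `[-s, s]` is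
seen from `τ`; it equals `arctan (2s / (x² + 1 - s²))` because `|s| < 1`. Integrating `sin^{2m+2}`
by parts expresses `φ_{m+2}` through `φ_{m+1}`, and `sin² θ`, `sin θ cos θ` are rational in `x`, so
`d/dx (τ (τ² - s²)^{m+1} φ_{m+2}(θ))` is `2m + 3` times the integrand of `I_{m+1}` plus
`(2m + 1) s²` times that of `I_m`, up to a combination of complex conjugates of `(τ² - s²)^{-n}` and
`τ (τ² - s²)^{-n-1}`. Such terms integrate to zero: they reduce to exact derivatives and to
`(τ² - s²)⁻¹`, which by partial fractions is a multiple of a difference of two shifts of `τ⁻¹`.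
Hence `(2m + 3) I_{m+1} = -(2m + 1) s² I_m`, and `I_0 = ∫ θ = 2πs` by Fubini, since `θ` is the
integral of the derivative of `arctan` over `[x - s, x + s]`. -/

noncomputable section

open Complex ComplexConjugate Filter Asymptotics Topology MeasureTheory

theorem integral_eq_zero_of_hasDerivAt_of_tendsto_cocompact {E : Type*} [NormedAddCommGroup E]
    [NormedSpace ℝ E] [CompleteSpace E] {f f' : ℝ → E} (hderiv : ∀ x, HasDerivAt f (f' x) x)
    (hf' : Integrable f') (hf : Tendsto f (cocompact ℝ) (𝓝 0)) : ∫ x, f' x = 0 := by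
  rw [cocompact_eq_atBot_atTop, tendsto_sup] at hf
  rw [integral_of_hasDerivAt_of_tendsto hderiv hf' hf.1 hf.2, sub_zero]

section Shift

variable {E : Type*} [NormedAddCommGroup E] [NormedSpace ℝ E] [CompleteSpace E]

theorem integral_intervalIntegral_comp_add {f : ℝ → E} (hf : Integrable f) (a b : ℝ) :
    ∫ x, ∫ u in a..b, f (x + u) = (b - a) • ∫ x, f x := by
  have hprod : Integrable (fun p : ℝ × ℝ ↦ f (p.1 + p.2))
      (volume.prod (volume.restrict (Set.uIoc a b))) := by
    have : IsFiniteMeasure (volume.restrict (Set.uIoc a b)) := ⟨by simp [Set.uIoc]⟩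
    exact (measurePreserving_add_prod _ _).integrable_comp_of_integrable (hf.comp_fst _)
  simp_rw [intervalIntegral.intervalIntegral_eq_integral_uIoc, integral_smul]
  rw [integral_integral_swap hprod, ← intervalIntegral.intervalIntegral_eq_integral_uIoc]
  simp only [integral_add_right_eq_self f, intervalIntegral.integral_const]

theorem integral_comp_add_sub_comp_sub {f f' : ℝ → E} (hderiv : ∀ x, HasDerivAt f (f' x) x)
    (hf' : Integrable f') (c : ℝ) : ∫ x, (f (x + c) - f (x - c)) = (2 * c) • ∫ x, f' x := by
  have hshift (x : ℝ) : ∫ u in -c..c, f' (x + u) = f (x + c) - f (x - c) := by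
    rw [intervalIntegral.integral_comp_add_left, ← sub_eq_add_neg]
    exact intervalIntegral.integral_eq_sub_of_hasDerivAt (fun u _ ↦ hderiv u)
      hf'.intervalIntegrable
  have hfubini := integral_intervalIntegral_comp_add hf' (-c) c
  simpa only [hshift, sub_neg_eq_add, ← two_mul] using hfubini

end Shift

section Phi

theorem hasDerivAt_phi (k : ℕ) (v : ℝ) : HasDerivAt (phi k) (Real.sin v ^ (2 * k - 2)) v :=
  (Continuous.integral_hasStrictDerivAt (by fun_prop) 0 v).hasDerivAt

theorem phi_one (v : ℝ) : phi 1 v = v := by simp [phi]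

theorem phi_zero (k : ℕ) : phi k 0 = 0 := intervalIntegral.integral_same

theorem phi_add_two (m : ℕ) (v : ℝ) :
    (2 * m + 2) * phi (m + 2) v =
      (2 * m + 1) * phi (m + 1) v - Real.sin v ^ (2 * m + 1) * Real.cos v := by
  have h := integral_sin_pow (a := 0) (b := v) (2 * m)
  rw [phi, phi, show 2 * (m + 2) - 2 = 2 * m + 2 by omega, show 2 * (m + 1) - 2 = 2 * m by omega, h,
    Real.sin_zero, zero_pow (Nat.succ_ne_zero _)]
  push_cast
  field_simp
  ring

theorem abs_phi_add_one_le (m : ℕ) (v : ℝ) : |phi (m + 1) v| ≤ |v| ^ (2 * m + 1) := by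
  have hsin : ∀ u ∈ Set.uIoc 0 v, ‖Real.sin u ^ (2 * (m + 1) - 2)‖ ≤ |v| ^ (2 * m) := by
    intro u hu
    have hu' : |u| ≤ |v| := by simpa using Set.abs_sub_left_of_mem_uIcc (Set.uIoc_subset_uIcc hu)
    rw [norm_pow, Real.norm_eq_abs, show 2 * (m + 1) - 2 = 2 * m by omega]
    exact pow_le_pow_left₀ (abs_nonneg _) (Real.abs_sin_le_abs.trans hu') _
  simpa [phi, pow_succ] using intervalIntegral.norm_integral_le_of_norm_le_const hsin

end Phi

theorem sin_sq_arctan_sub_arctan (x y : ℝ) :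
    Real.sin (Real.arctan x - Real.arctan y) ^ 2 = (x - y) ^ 2 / ((1 + x ^ 2) * (1 + y ^ 2)) := by
  rw [Real.sin_sub, Real.sin_arctan, Real.sin_arctan, Real.cos_arctan, Real.cos_arctan]
  have hx : √(1 + x ^ 2) ^ 2 = 1 + x ^ 2 := Real.sq_sqrt (by positivity)
  have hy : √(1 + y ^ 2) ^ 2 = 1 + y ^ 2 := Real.sq_sqrt (by positivity)
  field_simp
  rw [hx, hy]

theorem sin_mul_cos_arctan_sub_arctan (x y : ℝ) :
    Real.sin (Real.arctan x - Real.arctan y) * Real.cos (Real.arctan x - Real.arctan y) =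
      (x - y) * (1 + x * y) / ((1 + x ^ 2) * (1 + y ^ 2)) := by
  rw [Real.sin_sub, Real.cos_sub, Real.sin_arctan, Real.sin_arctan, Real.cos_arctan,
    Real.cos_arctan]
  have hx : √(1 + x ^ 2) ^ 2 = 1 + x ^ 2 := Real.sq_sqrt (by positivity)
  have hy : √(1 + y ^ 2) ^ 2 = 1 + y ^ 2 := Real.sq_sqrt (by positivity)
  field_simp
  rw [hx, hy]

section Decay

theorem ofReal_add_I_ne_zero (x : ℝ) : (x : ℂ) + I ≠ 0 := fun h ↦ by
  simpa using congrArg im h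

theorem normSq_ofReal_add_I (x : ℝ) : normSq ((x : ℂ) + I) = 1 + x ^ 2 := by
  simpa [add_comm] using normSq_add_mul_I x 1

theorem norm_inv_ofReal_add_I_sq (x : ℝ) : ‖((x : ℂ) + I)⁻¹‖ ^ 2 = (1 + x ^ 2)⁻¹ := by
  rw [norm_inv, inv_pow, ← normSq_eq_norm_sq, normSq_ofReal_add_I]

theorem continuous_inv_ofReal_add_I : Continuous fun x : ℝ ↦ ((x : ℂ) + I)⁻¹ :=
  (by fun_prop : Continuous fun x : ℝ ↦ (x : ℂ) + I).inv₀ ofReal_add_I_ne_zero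

theorem tendsto_inv_ofReal_add_I : Tendsto (fun x : ℝ ↦ ((x : ℂ) + I)⁻¹) (cocompact ℝ) (𝓝 0) := by
  rw [← Metric.cobounded_eq_cocompact]
  exact tendsto_inv₀_cobounded.comp
    ((tendsto_add_const_cobounded I).comp (RCLike.tendsto_ofReal_cobounded_cobounded ℂ))

theorem isBigO_inv_ofReal_add_I_pow {m n : ℕ} (h : n ≤ m) :
    (fun x : ℝ ↦ ((x : ℂ) + I)⁻¹ ^ m) =O[⊤] fun x : ℝ ↦ ((x : ℂ) + I)⁻¹ ^ n := by
  refine IsBigO.of_bound 1 (.of_forall fun x ↦ ?_)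
  have hle : ‖((x : ℂ) + I)⁻¹‖ ≤ 1 := by
    rw [← sq_le_one_iff₀ (norm_nonneg _), norm_inv_ofReal_add_I_sq]
    exact inv_le_one_of_one_le₀ (by nlinarith)
  simpa only [norm_pow, one_mul] using pow_le_pow_of_le_one (norm_nonneg _) hle h

theorem integrable_of_isBigO_inv_ofReal_add_I_pow {f : ℝ → ℂ} (hf : Continuous f) {n : ℕ}
    (hn : 2 ≤ n) (hO : f =O[⊤] fun x : ℝ ↦ ((x : ℂ) + I)⁻¹ ^ n) : Integrable f := by
  refine (hO.trans (isBigO_inv_ofReal_add_I_pow hn)).integrable hf.aestronglyMeasurable ?_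
  refine integrable_inv_one_add_sq.congr' (continuous_inv_ofReal_add_I.pow 2).aestronglyMeasurable
    (.of_forall fun x ↦ ?_)
  rw [norm_pow, norm_inv_ofReal_add_I_sq, Real.norm_of_nonneg (by positivity)]

theorem tendsto_zero_of_isBigO_inv_ofReal_add_I_pow {f : ℝ → ℂ} {n : ℕ} (hn : 1 ≤ n)
    (hO : f =O[⊤] fun x : ℝ ↦ ((x : ℂ) + I)⁻¹ ^ n) : Tendsto f (cocompact ℝ) (𝓝 0) := by
  refine ((hO.trans (isBigO_inv_ofReal_add_I_pow hn)).mono le_top).trans_tendsto ?_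
  simpa only [pow_one] using tendsto_inv_ofReal_add_I

theorem one_add_sq_le_two_mul (x u : ℝ) : 1 + x ^ 2 ≤ 2 * ((1 + u ^ 2) * (1 + (x + u) ^ 2)) := by
  nlinarith [sq_nonneg (x + 2 * u), sq_nonneg (u * (x + u))]

theorem inv_one_add_add_sq_le (x u : ℝ) :
    (1 + (x + u) ^ 2)⁻¹ ≤ 2 * (1 + u ^ 2) * (1 + x ^ 2)⁻¹ := by
  rw [← div_eq_mul_inv, inv_le_iff_one_le_mul₀ (by positivity), div_mul_eq_mul_div,
    le_div_iff₀ (by positivity)]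
  linarith [one_add_sq_le_two_mul x u]

theorem isBigO_inv_ofReal_add_ofReal_add_I (u : ℝ) :
    (fun x : ℝ ↦ (((x + u : ℝ) : ℂ) + I)⁻¹) =O[⊤] fun x : ℝ ↦ ((x : ℂ) + I)⁻¹ := by
  refine IsBigO.of_pow two_ne_zero (IsBigO.of_bound (2 * (1 + u ^ 2)) (.of_forall fun x ↦ ?_))
  simpa only [Pi.pow_apply, norm_pow, norm_inv_ofReal_add_I_sq] using inv_one_add_add_sq_le x u

theorem isBigO_ofReal_add_I_mul {f : ℝ → ℂ} {n : ℕ}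
    (hf : f =O[⊤] fun x : ℝ ↦ ((x : ℂ) + I)⁻¹ ^ (n + 1)) :
    (fun x : ℝ ↦ ((x : ℂ) + I) * f x) =O[⊤] fun x : ℝ ↦ ((x : ℂ) + I)⁻¹ ^ n := by
  refine ((isBigO_refl (fun x : ℝ ↦ (x : ℂ) + I) ⊤).mul hf).congr_right fun x ↦ ?_
  rw [pow_succ', mul_inv_cancel_left₀ (ofReal_add_I_ne_zero x)]

end Decay

theorem hasDerivAt_inv_ofReal_add_I (x : ℝ) :
    HasDerivAt (fun x : ℝ ↦ ((x : ℂ) + I)⁻¹) (-((x : ℂ) + I)⁻¹ ^ 2) x := by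
  simpa [div_eq_mul_inv] using
    (ofRealCLM.hasDerivAt.add_const I).fun_inv (x := x) (ofReal_add_I_ne_zero x)

theorem integrable_inv_ofReal_add_I_sq : Integrable fun x : ℝ ↦ ((x : ℂ) + I)⁻¹ ^ 2 :=
  integrable_of_isBigO_inv_ofReal_add_I_pow (continuous_inv_ofReal_add_I.pow 2) le_rfl
    (isBigO_refl _ _)

theorem integral_inv_ofReal_add_I_sq : ∫ x : ℝ, ((x : ℂ) + I)⁻¹ ^ 2 = 0 := by
  simpa only [integral_neg, neg_eq_zero] using
    integral_eq_zero_of_hasDerivAt_of_tendsto_cocompact hasDerivAt_inv_ofReal_add_I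
      integrable_inv_ofReal_add_I_sq.neg tendsto_inv_ofReal_add_I

section Quad

/-- The quadratic `τ² - s²` restricted to the horizontal line `τ = x + i`. -/
def quad (s x : ℝ) : ℂ := ((x : ℂ) + I) ^ 2 - (s : ℂ) ^ 2

variable (s x : ℝ)

theorem ofReal_add_I_sq_eq : ((x : ℂ) + I) ^ 2 = quad s x + s ^ 2 := by
  rw [quad]
  ring

theorem quad_eq_mul : quad s x = (((x - s : ℝ) : ℂ) + I) * (((x + s : ℝ) : ℂ) + I) := by
  rw [quad]
  push_cast
  ring

theorem quad_ne_zero : quad s x ≠ 0 := by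
  rw [quad_eq_mul]
  exact mul_ne_zero (ofReal_add_I_ne_zero _) (ofReal_add_I_ne_zero _)

theorem quad_mul_conj :
    quad s x * conj (quad s x) = (((1 + (x + s) ^ 2) * (1 + (x - s) ^ 2) : ℝ) : ℂ) := by
  rw [mul_conj, quad_eq_mul, normSq_mul, normSq_ofReal_add_I, normSq_ofReal_add_I, mul_comm]

theorem continuous_quad : Continuous (quad s) := by
  unfold quad
  fun_prop

theorem continuous_inv_quad_pow (n : ℕ) : Continuous fun x ↦ (quad s x)⁻¹ ^ n :=
  ((continuous_quad s).inv₀ (quad_ne_zero s)).pow n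

theorem hasDerivAt_quad : HasDerivAt (quad s) (2 * ((x : ℂ) + I)) x := by
  convert! ((ofRealCLM.hasDerivAt.add_const I).fun_pow 2).sub_const ((s : ℂ) ^ 2) using 1
  simp

theorem hasDerivAt_inv_quad_pow (n : ℕ) :
    HasDerivAt (fun x ↦ (quad s x)⁻¹ ^ (n + 1))
      (-2 * (n + 1) * (((x : ℂ) + I) * (quad s x)⁻¹ ^ (n + 2))) x := by
  convert! ((hasDerivAt_quad s x).fun_inv (quad_ne_zero s x)).fun_pow (n + 1) using 1
  simp only [Nat.add_sub_cancel, div_eq_mul_inv]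
  push_cast
  ring

theorem hasDerivAt_ofReal_add_I_mul_inv_quad_pow (n : ℕ) :
    HasDerivAt (fun x : ℝ ↦ ((x : ℂ) + I) * (quad s x)⁻¹ ^ (n + 1))
      (-(2 * n + 1) * (quad s x)⁻¹ ^ (n + 1) -
        2 * (n + 1) * s ^ 2 * (quad s x)⁻¹ ^ (n + 2)) x := by
  convert! (ofRealCLM.hasDerivAt.add_const I).mul (hasDerivAt_inv_quad_pow s x n) using 1
  have hcancel : quad s x * (quad s x)⁻¹ ^ (n + 2) = (quad s x)⁻¹ ^ (n + 1) := by
    rw [pow_succ', mul_inv_cancel_left₀ (quad_ne_zero s x)]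
  simp only [ofRealCLM_apply, ofReal_one, one_mul]
  linear_combination (2 * (n + 1) : ℂ) * (quad s x)⁻¹ ^ (n + 2) * ofReal_add_I_sq_eq s x +
    (2 * (n + 1) : ℂ) * hcancel

theorem isBigO_quad : quad s =O[⊤] fun x : ℝ ↦ ((x : ℂ) + I) ^ 2 := by
  refine (isBigO_refl _ _).sub (IsBigO.of_bound (s ^ 2) (.of_forall fun x ↦ ?_))
  have hone : 1 ≤ ‖(x : ℂ) + I‖ ^ 2 := by
    rw [← normSq_eq_norm_sq, normSq_ofReal_add_I]
    exact le_add_of_nonneg_right (sq_nonneg x)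
  simpa using le_mul_of_one_le_right (sq_nonneg s) hone

theorem isBigO_inv_quad_pow (n : ℕ) :
    (fun x ↦ (quad s x)⁻¹ ^ n) =O[⊤] fun x : ℝ ↦ ((x : ℂ) + I)⁻¹ ^ (2 * n) := by
  have hmul := (isBigO_inv_ofReal_add_ofReal_add_I (-s)).mul (isBigO_inv_ofReal_add_ofReal_add_I s)
  refine (hmul.pow n).congr (fun x ↦ ?_) fun x ↦ ?_
  · rw [quad_eq_mul, mul_inv, ← sub_eq_add_neg]
  · rw [pow_mul, sq]

theorem integrable_inv_quad_pow (n : ℕ) : Integrable fun x ↦ (quad s x)⁻¹ ^ (n + 1) :=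
  integrable_of_isBigO_inv_ofReal_add_I_pow (continuous_inv_quad_pow s _) (by omega)
    (isBigO_inv_quad_pow s _)

theorem isBigO_ofReal_add_I_mul_inv_quad_pow (n : ℕ) :
    (fun x : ℝ ↦ ((x : ℂ) + I) * (quad s x)⁻¹ ^ (n + 1)) =O[⊤]
      fun x : ℝ ↦ ((x : ℂ) + I)⁻¹ ^ (2 * n + 1) :=
  isBigO_ofReal_add_I_mul (isBigO_inv_quad_pow s (n + 1))

theorem integrable_ofReal_add_I_mul_inv_quad_pow (n : ℕ) :
    Integrable fun x : ℝ ↦ ((x : ℂ) + I) * (quad s x)⁻¹ ^ (n + 2) :=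
  integrable_of_isBigO_inv_ofReal_add_I_pow
    (by have := continuous_inv_quad_pow s (n + 2); fun_prop) (by omega)
    (isBigO_ofReal_add_I_mul_inv_quad_pow s (n + 1))

theorem integral_ofReal_add_I_mul_inv_quad_pow (n : ℕ) :
    ∫ x : ℝ, ((x : ℂ) + I) * (quad s x)⁻¹ ^ (n + 2) = 0 := by
  have hzero := integral_eq_zero_of_hasDerivAt_of_tendsto_cocompact
    (fun x ↦ hasDerivAt_inv_quad_pow s x n)
    ((integrable_ofReal_add_I_mul_inv_quad_pow s n).const_mul _)
    (tendsto_zero_of_isBigO_inv_ofReal_add_I_pow (by omega) (isBigO_inv_quad_pow s (n + 1)))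
  rw [integral_const_mul] at hzero
  exact (mul_eq_zero.mp hzero).resolve_left
    (mul_ne_zero (by norm_num) n.cast_add_one_ne_zero)

variable {s}

theorem integral_inv_quad (hs : s ≠ 0) : ∫ x, (quad s x)⁻¹ = 0 := by
  have hshift := integral_comp_add_sub_comp_sub hasDerivAt_inv_ofReal_add_I
    integrable_inv_ofReal_add_I_sq.neg s
  have hpartial (x : ℝ) : (((x + s : ℝ) : ℂ) + I)⁻¹ - (((x - s : ℝ) : ℂ) + I)⁻¹ =
      -2 * s * (quad s x)⁻¹ := by
    rw [inv_sub_inv (ofReal_add_I_ne_zero _) (ofReal_add_I_ne_zero _), quad_eq_mul]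
    push_cast
    ring
  simp only [hpartial, integral_const_mul, integral_neg, integral_inv_ofReal_add_I_sq] at hshift
  simpa [hs] using hshift

theorem integral_inv_quad_pow (hs : s ≠ 0) (n : ℕ) : ∫ x, (quad s x)⁻¹ ^ (n + 1) = 0 := by
  induction n with
  | zero => simpa using integral_inv_quad hs
  | succ n ih =>
    have hfst := (integrable_inv_quad_pow s n).const_mul (-(2 * n + 1) : ℂ)
    have hsnd := (integrable_inv_quad_pow s (n + 1)).const_mul (2 * (n + 1) * s ^ 2 : ℂ)
    have hzero := integral_eq_zero_of_hasDerivAt_of_tendsto_cocompact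
      (fun x ↦ hasDerivAt_ofReal_add_I_mul_inv_quad_pow s x n) (hfst.sub hsnd)
      (tendsto_zero_of_isBigO_inv_ofReal_add_I_pow (by omega)
        (isBigO_ofReal_add_I_mul_inv_quad_pow s n))
    rw [integral_sub hfst hsnd, integral_const_mul, integral_const_mul, ih, mul_zero, zero_sub,
      neg_eq_zero] at hzero
    refine (mul_eq_zero.mp hzero).resolve_left (mul_ne_zero ?_ (by simpa using hs))
    norm_cast

/-- The complex conjugate of the elementary remainder left over when
`d/dx (τ (τ² - s²)^(m+1) φ(θ))`, with `φ` of weight `m + 2`, is expressed through the integrands of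
weights `m + 2` and `m + 1`. -/
def quadRemainder (m : ℕ) (s x : ℝ) : ℂ :=
  (quad s x)⁻¹ ^ (m + 1) + 2 * I * (((x : ℂ) + I) * (quad s x)⁻¹ ^ (m + 2)) +
    4 * (quad s x)⁻¹ ^ (m + 2)

theorem integrable_quadRemainder (m : ℕ) (s : ℝ) : Integrable (quadRemainder m s) :=
  ((integrable_inv_quad_pow s m).add
    ((integrable_ofReal_add_I_mul_inv_quad_pow s m).const_mul (2 * I))).add
      ((integrable_inv_quad_pow s (m + 1)).const_mul 4)

theorem integral_quadRemainder (hs : s ≠ 0) (m : ℕ) : ∫ x, quadRemainder m s x = 0 := by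
  have hpow := integrable_inv_quad_pow s m
  have hmul := (integrable_ofReal_add_I_mul_inv_quad_pow s m).const_mul (2 * I)
  have hpow' := (integrable_inv_quad_pow s (m + 1)).const_mul 4
  calc ∫ x, quadRemainder m s x
      = (∫ x, (quad s x)⁻¹ ^ (m + 1)) + 2 * I * (∫ x : ℝ, ((x : ℂ) + I) * (quad s x)⁻¹ ^ (m + 2)) +
          4 * ∫ x, (quad s x)⁻¹ ^ (m + 2) := by
        rw [← integral_const_mul, ← integral_const_mul, ← integral_add hpow hmul]
        exact integral_add (hpow.add hmul) hpow'
    _ = 0 := by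
        rw [integral_inv_quad_pow hs, integral_inv_quad_pow hs,
          integral_ofReal_add_I_mul_inv_quad_pow]
        ring

theorem conj_quadRemainder (m : ℕ) (s x : ℝ) :
    conj (quadRemainder m s x) =
      (conj (quad s x) - 2 * I * ((x : ℂ) + I)) / conj (quad s x) ^ (m + 2) := by
  have hr : conj (quad s x) ≠ 0 := (map_ne_zero _).mpr (quad_ne_zero s x)
  simp only [quadRemainder, map_add, map_mul, map_pow, map_inv₀, conj_ofReal, conj_I, map_ofNat,
    inv_pow]
  field_simp
  linear_combination 4 * conj (quad s x) ^ (m + 1) * I_sq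

end Quad

section Angle

/-- The angle under which the segment `[-s, s]` is seen from `x + i`. -/
def angle (s x : ℝ) : ℝ := Real.arctan (x + s) - Real.arctan (x - s)

variable (s x : ℝ)

theorem continuous_angle : Continuous (angle s) := by
  unfold angle
  fun_prop

theorem hasDerivAt_angle :
    HasDerivAt (angle s) (-(4 * s * x) / ((1 + (x + s) ^ 2) * (1 + (x - s) ^ 2))) x := by
  convert! ((hasDerivAt_id x).add_const s).arctan.sub ((hasDerivAt_id x).sub_const s).arctan using 1
  have hadd : 1 + (x + s) ^ 2 ≠ 0 := by positivity
  have hsub : 1 + (x - s) ^ 2 ≠ 0 := by positivity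
  simp only [id_eq, one_div, mul_one]
  field_simp
  ring

theorem sin_angle_sq :
    Real.sin (angle s x) ^ 2 = (2 * s) ^ 2 / ((1 + (x + s) ^ 2) * (1 + (x - s) ^ 2)) := by
  rw [angle, sin_sq_arctan_sub_arctan]
  ring

theorem sin_angle_mul_cos_angle :
    Real.sin (angle s x) * Real.cos (angle s x) =
      2 * s * (x ^ 2 + 1 - s ^ 2) / ((1 + (x + s) ^ 2) * (1 + (x - s) ^ 2)) := by
  rw [angle, sin_mul_cos_arctan_sub_arctan]
  ring

theorem integral_angle : ∫ x, angle s x = 2 * s * Real.pi := by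
  simpa only [angle, integral_univ_inv_one_add_sq, smul_eq_mul] using
    integral_comp_add_sub_comp_sub (f := Real.arctan)
      (fun x ↦ by simpa using Real.hasDerivAt_arctan x) integrable_inv_one_add_sq s

theorem abs_angle_le : |angle s x| ≤ 2 * (1 + s ^ 2) * (2 * |s|) * (1 + x ^ 2)⁻¹ := by
  have hint : angle s x = ∫ u in -s..s, (1 + (x + u) ^ 2)⁻¹ := by
    rw [intervalIntegral.integral_comp_add_left (fun x ↦ (1 + x ^ 2)⁻¹),
      integral_inv_one_add_sq, angle, ← sub_eq_add_neg]
  have hbound : ∀ u ∈ Set.uIoc (-s) s,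
      ‖(1 + (x + u) ^ 2)⁻¹‖ ≤ 2 * (1 + s ^ 2) * (1 + x ^ 2)⁻¹ := by
    intro u hu
    have hu' : u ^ 2 ≤ s ^ 2 := by
      rcases Set.mem_uIoc.mp hu with h | h <;> nlinarith
    rw [Real.norm_of_nonneg (by positivity)]
    exact (inv_one_add_add_sq_le x u).trans (by gcongr)
  have hnorm := intervalIntegral.norm_integral_le_of_norm_le_const hbound
  rw [← hint, sub_neg_eq_add, ← two_mul, abs_mul, abs_two, Real.norm_eq_abs] at hnorm
  linarith

theorem isBigO_angle : (fun x ↦ (angle s x : ℂ)) =O[⊤] fun x : ℝ ↦ ((x : ℂ) + I)⁻¹ ^ 2 := by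
  refine IsBigO.of_bound (2 * (1 + s ^ 2) * (2 * |s|)) (.of_forall fun x ↦ ?_)
  simpa only [norm_pow, norm_inv_ofReal_add_I_sq, norm_real, Real.norm_eq_abs] using
    abs_angle_le s x

variable {s x}

theorem angle_eq_arctan_div (h : s ^ 2 < 1 + x ^ 2) :
    angle s x = Real.arctan (2 * s / (x ^ 2 + 1 - s ^ 2)) := by
  rw [angle, sub_eq_add_neg, ← Real.arctan_neg, Real.arctan_add (by nlinarith)]
  ring_nf

end Angle

section PhiIntegrand

/-- The integrand `(τ² - s²)^m φ(θ)` on the line `τ = x + i`, with `φ` of weight `k = m + 1`. -/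
def phiIntegrand (m : ℕ) (s x : ℝ) : ℂ := quad s x ^ m * (phi (m + 1) (angle s x) : ℂ)

variable (m : ℕ) (s x : ℝ)

theorem continuous_phiIntegrand : Continuous (phiIntegrand m s) := by
  have hphi : Continuous (phi (m + 1)) :=
    continuous_iff_continuousAt.mpr fun v ↦ (hasDerivAt_phi (m + 1) v).continuousAt
  exact ((continuous_quad s).pow m).mul
    (continuous_ofReal.comp (hphi.comp (continuous_angle s)))

theorem isBigO_phiIntegrand :
    phiIntegrand m s =O[⊤] fun x : ℝ ↦ ((x : ℂ) + I)⁻¹ ^ (2 * m + 2) := by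
  have hphi : (fun x ↦ (phi (m + 1) (angle s x) : ℂ)) =O[⊤]
      fun x : ℝ ↦ (((x : ℂ) + I)⁻¹ ^ 2) ^ (2 * m + 1) := by
    refine IsBigO.trans (.of_bound 1 (.of_forall fun x ↦ ?_)) ((isBigO_angle s).pow (2 * m + 1))
    simpa using abs_phi_add_one_le m (angle s x)
  refine (((isBigO_quad s).pow m).mul hphi).congr_right fun x ↦ ?_
  rw [← pow_mul, ← pow_mul, show 2 * (2 * m + 1) = 2 * m + (2 * m + 2) by ring, pow_add,
    inv_pow, mul_inv_cancel_left₀ (pow_ne_zero _ (ofReal_add_I_ne_zero x))]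

theorem integrable_phiIntegrand : Integrable (phiIntegrand m s) :=
  integrable_of_isBigO_inv_ofReal_add_I_pow (continuous_phiIntegrand m s) (by omega)
    (isBigO_phiIntegrand m s)

theorem hasDerivAt_phi_angle :
    HasDerivAt (fun x ↦ phi (m + 2) (angle s x))
      (-(4 * s * x * (2 * s) ^ (2 * m + 2)) /
        ((1 + (x + s) ^ 2) * (1 + (x - s) ^ 2)) ^ (m + 2)) x := by
  convert! (hasDerivAt_phi (m + 2) (angle s x)).comp x (hasDerivAt_angle s x) using 1
  rw [show 2 * (m + 2) - 2 = 2 * (m + 1) by omega, pow_mul, sin_angle_sq, div_pow, ← pow_mul]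
  field_simp
  ring

theorem phi_add_two_angle :
    (2 * m + 2) * phi (m + 2) (angle s x) =
      (2 * m + 1) * phi (m + 1) (angle s x) - (2 * s) ^ (2 * m + 1) * (x ^ 2 + 1 - s ^ 2) /
        ((1 + (x + s) ^ 2) * (1 + (x - s) ^ 2)) ^ (m + 1) := by
  rw [phi_add_two, pow_succ, mul_assoc (_ ^ _), sin_angle_mul_cos_angle, pow_mul, sin_angle_sq,
    div_pow, ← pow_mul]
  field_simp
  ring

theorem mul_conj_quad_add_eq :
    (x ^ 2 + 1 - s ^ 2) * conj (quad s x) + 8 * x * ((x : ℂ) + I) =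
      quad s x * (conj (quad s x) - 2 * I * ((x : ℂ) + I)) := by
  simp only [quad, map_sub, map_pow, map_add, conj_ofReal, conj_I]
  linear_combination (((x : ℂ) - I) ^ 2 - s ^ 2 + 8 * x * (x + I)) * I_sq

theorem boundary_term_eq_conj_quadRemainder :
    ((x : ℂ) + I) * (quad s x ^ (m + 1) * ((-(4 * s * x * (2 * s) ^ (2 * m + 2)) /
        ((1 + (x + s) ^ 2) * (1 + (x - s) ^ 2)) ^ (m + 2) : ℝ) : ℂ)) -
      s ^ 2 * quad s x ^ m * (((2 * s) ^ (2 * m + 1) * (x ^ 2 + 1 - s ^ 2) /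
        ((1 + (x + s) ^ 2) * (1 + (x - s) ^ 2)) ^ (m + 1) : ℝ) : ℂ) =
      -(s ^ 2 * (2 * s) ^ (2 * m + 1) * conj (quadRemainder m s x)) := by
  have hq := quad_ne_zero s x
  have hr : conj (quad s x) ≠ 0 := (map_ne_zero _).mpr hq
  rw [conj_quadRemainder, ofReal_div, ofReal_div, ofReal_pow, ofReal_pow _ (m + 1),
    ← quad_mul_conj, eq_comm]
  push_cast
  simp only [mul_pow (quad s x)]
  field_simp
  linear_combination (s : ℂ) ^ 2 * (2 * s) ^ (2 * m + 1) * quad s x ^ (2 * m + 2) *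
    conj (quad s x) ^ (m + 1) * mul_conj_quad_add_eq s x

theorem hasDerivAt_ofReal_add_I_mul_phiIntegrand :
    HasDerivAt (fun x : ℝ ↦ ((x : ℂ) + I) * phiIntegrand (m + 1) s x)
      ((2 * m + 3) * phiIntegrand (m + 1) s x + (2 * m + 1) * s ^ 2 * phiIntegrand m s x -
        s ^ 2 * (2 * s) ^ (2 * m + 1) * conj (quadRemainder m s x)) x := by
  convert! (ofRealCLM.hasDerivAt.add_const I).mul
    (((hasDerivAt_quad s x).fun_pow (m + 1)).fun_mul (hasDerivAt_phi_angle m s x).ofReal_comp)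
    using 1
  have hred := congrArg ofReal (phi_add_two_angle m s x)
  rw [ofReal_sub] at hred
  push_cast [-ofReal_div] at hred
  simp only [phiIntegrand, ofRealCLM_apply, ofReal_one, Nat.add_sub_cancel]
  push_cast [-ofReal_div]
  linear_combination (-2 * (m + 1) : ℂ) * quad s x ^ m * phi (m + 2) (angle s x) *
    ofReal_add_I_sq_eq s x - (s : ℂ) ^ 2 * quad s x ^ m * hred -
    boundary_term_eq_conj_quadRemainder m s x

theorem tendsto_ofReal_add_I_mul_phiIntegrand :
    Tendsto (fun x : ℝ ↦ ((x : ℂ) + I) * phiIntegrand (m + 1) s x) (cocompact ℝ) (𝓝 0) :=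
  tendsto_zero_of_isBigO_inv_ofReal_add_I_pow (n := 2 * m + 3) (by omega)
    (isBigO_ofReal_add_I_mul (isBigO_phiIntegrand (m + 1) s))

variable {s} in
theorem integral_phiIntegrand_succ (hs : s ≠ 0) :
    (2 * m + 3) * ∫ x, phiIntegrand (m + 1) s x =
      -((2 * m + 1) * s ^ 2) * ∫ x, phiIntegrand m s x := by
  have hsucc := (integrable_phiIntegrand (m + 1) s).const_mul (2 * m + 3 : ℂ)
  have hself := (integrable_phiIntegrand m s).const_mul ((2 * m + 1) * s ^ 2 : ℂ)
  have hrem : Integrable fun x ↦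
      (s ^ 2 * (2 * s) ^ (2 * m + 1) * conj (quadRemainder m s x) : ℂ) :=
    ((LinearIsometryEquiv.integrable_comp_iff conjLIE).mpr
      (integrable_quadRemainder m s)).const_mul _
  have hrem_zero : ∫ x, (s ^ 2 * (2 * s) ^ (2 * m + 1) * conj (quadRemainder m s x) : ℂ) = 0 := by
    rw [integral_const_mul, integral_conj, integral_quadRemainder hs, map_zero, mul_zero]
  have hzero := (integral_sub (hsucc.add hself) hrem).symm.trans
    (integral_eq_zero_of_hasDerivAt_of_tendsto_cocompact
      (hasDerivAt_ofReal_add_I_mul_phiIntegrand m s) ((hsucc.add hself).sub hrem)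
      (tendsto_ofReal_add_I_mul_phiIntegrand m s))
  rw [hrem_zero, integral_add' hsucc hself, integral_const_mul, integral_const_mul] at hzero
  linear_combination hzero

theorem phiIntegrand_zero_right : phiIntegrand m 0 x = 0 := by
  simp [phiIntegrand, angle, phi_zero]

theorem integral_phiIntegrand :
    ∫ x, phiIntegrand m s x = 2 * Real.pi * s * (-s ^ 2) ^ m / (2 * m + 1) := by
  rcases eq_or_ne s 0 with rfl | hs
  · simp [phiIntegrand_zero_right]
  rw [eq_div_iff (by norm_cast), mul_comm]
  induction m with
  | zero =>
    have hangle : ∫ x, (angle s x : ℂ) = ((2 * s * Real.pi : ℝ) : ℂ) := by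
      rw [integral_complex_ofReal, integral_angle]
    simp only [phiIntegrand, zero_add, pow_zero, one_mul, phi_one, hangle]
    push_cast
    ring
  | succ m ih =>
    have hsucc := integral_phiIntegrand_succ m hs
    push_cast
    linear_combination hsucc - (s : ℂ) ^ 2 * ih

theorem phiIntegrand_eq_arctan (h : s ^ 2 < 1 + x ^ 2) :
    phiIntegrand m s x = (((x : ℂ) + I) ^ 2 - (s : ℂ) ^ 2) ^ m *
      (phi (m + 1) (Real.arctan (2 * s / (x ^ 2 + 1 - s ^ 2))) : ℂ) := by
  rw [phiIntegrand, quad, angle_eq_arctan_div h]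

theorem integral_sub_sq_pow_mul_phi_arctan {s y : ℝ} (hy : |s| < y) :
    ∫ w : ℝ, (((w : ℂ) + y * I) ^ 2 - (s : ℂ) ^ 2) ^ m *
        (phi (m + 1) (Real.arctan (2 * s * y / (w ^ 2 + y ^ 2 - s ^ 2))) : ℂ) =
      2 * Real.pi * s * (-s ^ 2) ^ m / (2 * m + 1) := by
  have hy0 : 0 < y := (abs_nonneg s).trans_lt hy
  obtain ⟨t, rfl⟩ : ∃ t, s = y * t := ⟨s / y, by field_simp⟩
  have ht : |t| < 1 := by rwa [abs_mul, abs_of_pos hy0, mul_lt_iff_lt_one_right hy0] at hy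
  set F : ℝ → ℂ := fun w ↦ (((w : ℂ) + y * I) ^ 2 - ((y * t : ℝ) : ℂ) ^ 2) ^ m *
    (phi (m + 1) (Real.arctan (2 * (y * t) * y / (w ^ 2 + y ^ 2 - (y * t) ^ 2))) : ℂ)
  have hscale (x : ℝ) : F (y * x) = (y ^ 2) ^ m * phiIntegrand m t x := by
    have hbase : ((y * x : ℝ) + y * I) ^ 2 - ((y * t : ℝ) : ℂ) ^ 2 =
        y ^ 2 * (((x : ℂ) + I) ^ 2 - (t : ℂ) ^ 2) := by
      push_cast
      ring
    have harg : 2 * (y * t) * y / ((y * x) ^ 2 + y ^ 2 - (y * t) ^ 2) =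
        2 * t / (x ^ 2 + 1 - t ^ 2) := by
      rw [← mul_div_mul_left (2 * t) _ (pow_pos hy0 2).ne']
      ring_nf
    have hlt : t ^ 2 < 1 + x ^ 2 := by nlinarith [(sq_lt_one_iff_abs_lt_one t).mpr ht]
    simp only [F]
    rw [hbase, harg, phiIntegrand_eq_arctan m t x hlt, mul_pow, mul_assoc]
  have hsubst := Measure.integral_comp_mul_left F y
  simp only [hscale, integral_const_mul, integral_phiIntegrand, abs_of_pos (inv_pos.mpr hy0)]
    at hsubst
  rw [eq_inv_smul_iff₀ hy0.ne'] at hsubst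
  rw [← hsubst, real_smul]
  push_cast
  rw [show -((y : ℂ) * t) ^ 2 = y ^ 2 * -t ^ 2 by ring, mul_pow]
  ring

end PhiIntegrand

theorem rpow_natCast_add_one_sub_half {D : ℝ} (hD : 0 ≤ D) (m : ℕ) :
    D ^ (((m + 1 : ℕ) : ℝ) - 1 / 2) = √D ^ (2 * m + 1) := by
  rw [Real.sqrt_eq_rpow, ← Real.rpow_natCast, ← Real.rpow_mul hD]
  push_cast
  ring_nf

theorem mul_sub_sq_div_four_mul {K : Type*} [Field K] [CharZero K] {a : K} (ha : a ≠ 0) (s t : K) :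
    a * t - (2 * a * s) ^ 2 / (4 * a) = a * (t - s ^ 2) := by
  field_simp
  ring

theorem stmt8_general {k : ℕ} (hk : 1 ≤ k) {D a y : ℝ} (hD : 0 ≤ D) (ha : 0 < a)
    (hy : √D / (2 * a) < y) :
    ∫ w : ℝ,
        ((a : ℂ) * ((w : ℂ) + (y : ℂ) * I) ^ 2 - (D : ℂ) / (4 * (a : ℂ))) ^ (k - 1) *
          ((phi k (Real.arctan (√D * y / (a * (w ^ 2 + y ^ 2) - D / (4 * a)))) : ℝ) : ℂ)
      = (-1 : ℂ) ^ (k + 1) * ((D ^ ((k : ℝ) - 1 / 2) : ℝ) : ℂ) * ((Real.pi : ℝ) : ℂ) /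
          ((a : ℂ) ^ k * 2 ^ (2 * k - 2) * (2 * (k : ℂ) - 1)) := by
  obtain ⟨m, rfl⟩ : ∃ m, k = m + 1 := ⟨k - 1, by omega⟩
  have haC : (a : ℂ) ≠ 0 := mod_cast ha.ne'
  set s := √D / (2 * a) with hs
  have hroot : √D = 2 * a * s := by rw [hs, mul_div_cancel₀ _ (by positivity)]
  have hDs : D = (2 * a * s) ^ 2 := by rw [← hroot, Real.sq_sqrt hD]
  have hsy : |s| < y := by rwa [abs_of_nonneg (by positivity)]
  have hbase (τ : ℂ) : a * τ ^ 2 - (D : ℂ) / (4 * a) = a * (τ ^ 2 - (s : ℂ) ^ 2) := by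
    rw [← mul_sub_sq_div_four_mul haC, hDs]
    push_cast
    rfl
  have harg (t : ℝ) : √D * y / (a * t - D / (4 * a)) = 2 * s * y / (t - s ^ 2) := by
    rw [hroot, hDs, mul_sub_sq_div_four_mul ha.ne', ← mul_div_mul_left (2 * s * y) _ ha.ne']
    ring_nf
  have hpow : D ^ (((m + 1 : ℕ) : ℝ) - 1 / 2) = (2 * a * s) ^ (2 * m + 1) := by
    rw [rpow_natCast_add_one_sub_half hD, hroot]
  simp only [Nat.add_sub_cancel, hbase, harg, mul_pow (a : ℂ), mul_assoc ((a : ℂ) ^ m),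
    integral_const_mul, integral_sub_sq_pow_mul_phi_arctan m hsy, hpow]
  push_cast
  rw [neg_pow, show 2 * (m + 1) - 2 = 2 * m by omega]
  field_simp
  ring

end

theorem stmt8 (k : ℕ) (hk : 2 ≤ k) (D : ℤ) (hD : 0 < D)
    (hD4 : D % 4 = 0 ∨ D % 4 = 1) (hDsq : ¬∃ m : ℤ, m ^ 2 = D)
    (a : ℤ) (ha : 1 ≤ a) (y : ℝ) (hy : Real.sqrt (D : ℝ) / (2 * (a : ℝ)) < y) :
    ∫ w : ℝ,
        ((a : ℂ) * ((w : ℂ) + (y : ℂ) * Complex.I) ^ 2 - (D : ℂ) / (4 * (a : ℂ))) ^ (k - 1) *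
          ((phi k (Real.arctan
              (Real.sqrt (D : ℝ) * y / ((a : ℝ) * (w ^ 2 + y ^ 2) - (D : ℝ) / (4 * (a : ℝ))))) : ℝ) : ℂ)
      = (-1 : ℂ) ^ (k + 1) * Dpow D ((k : ℝ) - 1 / 2) * ((Real.pi : ℝ) : ℂ) /
          ((a : ℂ) ^ k * 2 ^ (2 * k - 2) * (2 * (k : ℂ) - 1)) := by
  simpa [Dpow] using stmt8_general (by omega : 1 ≤ k) (D := D) (a := a) (by positivity)
    (by positivity) hy
end

section
/- For every prime p and every τ ∈ ℍ: (F_{1−k,D}|_{2−2k}T_p)(τ) = F_{1−k,Dp²}(τ) + p^{−k}·(D|p)·F_{1−k,D}(τ) + p^{1−2k}·F_{1−k,D/p²}(τ), where F_{1−k,D/p²} := 0 if p² ∤ D. -/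
/-!
The Hecke operator replaces the forms of discriminant `D` by their images under the substitutions
`(p 0; 0 1)` and `(1 r; 0 p)`, `0 ≤ r < p`, which have discriminant `D p²`, and the normalized
summands of `F` are covariant under these substitutions. As the series converge absolutely, it
remains to count how often a form `Q` of discriminant `D p²` is hit. If `p ∤ Q`, this is the number
of zeros in `ℙ¹(𝔽_p)` of `Q mod p`, whose discriminant vanishes, so it is `1`. If `Q = p q`, it is
the number of zeros of `q mod p`, which is `1 + (D|p)` when `p ∤ q` and `1 + p` when `p ∣ q`. The
contributions `1`, `(D|p)` and `p` give the three terms on the right-hand side.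

For convergence, the summand is `O(|Q(τ,1)|⁻²) = O((1 + b²)⁻¹)` in the middle coefficient `b`, and
the forms with given `b` correspond to factorizations of `b² - D ≠ 0`, of which there are at most
`O(|b|^ε)`.
-/

section DivisorBound

theorem succ_pow_le_pow_self_mul_two_pow {m : ℕ} (hm : m ≠ 0) (e : ℕ) :
    (e + 1) ^ m ≤ m ^ m * 2 ^ e := by
  have hdiv : e + 1 ≤ m * 2 ^ (e / m) :=
    calc e + 1 ≤ m * (e / m + 1) := Nat.lt_mul_div_succ e (Nat.pos_of_ne_zero hm)
      _ ≤ m * 2 ^ (e / m) := Nat.mul_le_mul_left m (Nat.lt_two_pow_self)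
  calc (e + 1) ^ m ≤ (m * 2 ^ (e / m)) ^ m := Nat.pow_le_pow_left hdiv m
    _ = m ^ m * 2 ^ (e / m * m) := by rw [mul_pow, pow_mul]
    _ ≤ m ^ m * 2 ^ e := by gcongr; exacts [one_le_two, Nat.div_mul_le_self e m]

theorem succ_pow_le_pow_of_two_pow_le {m b : ℕ} (hb : 2 ^ m ≤ b) (e : ℕ) :
    (e + 1) ^ m ≤ b ^ e :=
  calc (e + 1) ^ m ≤ (2 ^ e) ^ m := Nat.pow_le_pow_left Nat.lt_two_pow_self m
    _ = (2 ^ m) ^ e := pow_right_comm 2 e m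
    _ ≤ b ^ e := Nat.pow_le_pow_left hb e

theorem card_divisors_pow_le {m n : ℕ} (hm : m ≠ 0) (hn : n ≠ 0) :
    n.divisors.card ^ m ≤ (m ^ m) ^ 2 ^ m * n := by
  have factor_le : ∀ q ∈ n.primeFactors, (n.factorization q + 1) ^ m ≤
      (if q < 2 ^ m then m ^ m else 1) * q ^ n.factorization q := by
    intro q hq
    split_ifs with hlt
    · exact (succ_pow_le_pow_self_mul_two_pow hm _).trans <| Nat.mul_le_mul_left _ <|
        Nat.pow_le_pow_left (Nat.prime_of_mem_primeFactors hq).two_le _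
    · rw [one_mul]
      exact succ_pow_le_pow_of_two_pow_le (not_lt.mp hlt) _
  have card_small_le : (n.primeFactors.filter (· < 2 ^ m)).card ≤ 2 ^ m := by
    calc _ ≤ (Finset.range (2 ^ m)).card := Finset.card_le_card fun q => by simp
      _ = 2 ^ m := Finset.card_range _
  calc n.divisors.card ^ m
      = ∏ q ∈ n.primeFactors, (n.factorization q + 1) ^ m := by
        rw [Nat.card_divisors hn, Finset.prod_pow]
    _ ≤ ∏ q ∈ n.primeFactors, (if q < 2 ^ m then m ^ m else 1) * q ^ n.factorization q :=
        Finset.prod_le_prod' factor_le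
    _ = (m ^ m) ^ (n.primeFactors.filter (· < 2 ^ m)).card * n := by
        rw [Finset.prod_mul_distrib, ← Finset.prod_filter, Finset.prod_const]
        congr 1
        exact Nat.prod_factorization_pow_eq_self hn
    _ ≤ (m ^ m) ^ 2 ^ m * n := by
        gcongr
        exact Nat.one_le_iff_ne_zero.mpr (pow_ne_zero m hm)

theorem card_int_divisorsAntidiag (z : ℤ) :
    z.divisorsAntidiag.card = 2 * z.natAbs.divisors.card := by
  have card_nat (n : ℕ) : n.divisorsAntidiagonal.card = n.divisors.card := by
    rw [← Nat.map_div_right_divisors, Finset.card_map]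
  cases z <;> simp only [Int.divisorsAntidiag, Finset.card_disjUnion, Finset.card_map, card_nat,
    Int.ofNat_eq_natCast, Int.natAbs_natCast, Int.natAbs_negSucc, two_mul]

end DivisorBound

section Summability

theorem summable_sigma_finset_of_nonneg {β α : Type*} {S : β → Finset α} {f : β → ℝ}
    (hf : ∀ b, 0 ≤ f b) (h : Summable fun b => (S b).card * f b) :
    Summable fun x : Σ b, S b => f x.1 := by
  refine (summable_sigma_of_nonneg fun x => hf x.1).mpr ⟨fun b => Summable.of_finite, ?_⟩
  simpa only [tsum_const, Nat.card_eq_fintype_card, Fintype.card_coe, nsmul_eq_mul] using h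

theorem summable_one_add_sq_rpow {s : ℝ} (hs : s < -1 / 2) :
    Summable fun b : ℤ => (1 + (b : ℝ) ^ 2) ^ s := by
  have hsq : Summable fun b : ℤ => |(b : ℝ)| ^ (2 * s) := by
    simpa using Real.summable_abs_int_rpow (b := -(2 * s)) (by linarith)
  refine hsq.of_norm_bounded_eventually ?_
  filter_upwards [(Set.finite_singleton (0 : ℤ)).compl_mem_cofinite] with b hb
  have hb : 0 < |(b : ℝ)| := abs_pos.mpr (Int.cast_ne_zero.mpr hb)
  calc ‖(1 + (b : ℝ) ^ 2) ^ s‖ = (1 + |(b : ℝ)| ^ 2) ^ s := by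
        rw [Real.norm_of_nonneg (by positivity), sq_abs]
    _ ≤ (|(b : ℝ)| ^ 2) ^ s :=
        Real.rpow_le_rpow_of_nonpos (by positivity) (by linarith) (by linarith)
    _ = |(b : ℝ)| ^ (2 * s) := by rw [← Real.rpow_natCast, ← Real.rpow_mul hb.le]; norm_num

theorem exists_card_divisors_sq_sub_le (D : ℤ) :
    ∃ C : ℝ, ∀ b : ℤ, ((b ^ 2 - D).natAbs.divisors.card : ℝ) ≤
      C * (1 + (b : ℝ) ^ 2) ^ (1 / 3 : ℝ) := by
  set c : ℝ := (3 ^ 3) ^ 2 ^ 3 * (1 + |(D : ℝ)|)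
  refine ⟨c ^ (1 / 3 : ℝ), fun b => ?_⟩
  rcases eq_or_ne (b ^ 2 - D) 0 with h | h
  · simp only [h, Int.natAbs_zero, Nat.divisors_zero, Finset.card_empty, Nat.cast_zero]
    positivity
  have natAbs_le : ((b ^ 2 - D).natAbs : ℝ) ≤ (1 + |(D : ℝ)|) * (1 + (b : ℝ) ^ 2) := by
    rw [Nat.cast_natAbs]
    push_cast
    rw [abs_le]
    constructor <;> nlinarith [le_abs_self (D : ℝ), neg_abs_le (D : ℝ), sq_nonneg (b : ℝ),
      mul_nonneg (abs_nonneg (D : ℝ)) (sq_nonneg (b : ℝ))]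
  have cube_le : ((b ^ 2 - D).natAbs.divisors.card : ℝ) ^ 3 ≤ c * (1 + (b : ℝ) ^ 2) :=
    calc ((b ^ 2 - D).natAbs.divisors.card : ℝ) ^ 3
        ≤ (3 ^ 3) ^ 2 ^ 3 * ((b ^ 2 - D).natAbs : ℝ) := by
          exact_mod_cast card_divisors_pow_le three_ne_zero (Int.natAbs_ne_zero.mpr h)
      _ ≤ c * (1 + (b : ℝ) ^ 2) := by rw [mul_assoc]; gcongr
  calc ((b ^ 2 - D).natAbs.divisors.card : ℝ)
      = (((b ^ 2 - D).natAbs.divisors.card : ℝ) ^ 3) ^ (1 / 3 : ℝ) := by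
        rw [← Real.rpow_natCast, ← Real.rpow_mul (Nat.cast_nonneg _)]; norm_num
    _ ≤ (c * (1 + (b : ℝ) ^ 2)) ^ (1 / 3 : ℝ) := by gcongr
    _ = c ^ (1 / 3 : ℝ) * (1 + (b : ℝ) ^ 2) ^ (1 / 3 : ℝ) :=
        Real.mul_rpow (by positivity) (by positivity)

theorem summable_card_divisorsAntidiag_sq_sub (D : ℤ) :
    Summable fun b : ℤ => ((b ^ 2 - D).divisorsAntidiag.card : ℝ) * (1 + (b : ℝ) ^ 2)⁻¹ := by
  obtain ⟨C, hC⟩ := exists_card_divisors_sq_sub_le D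
  refine ((summable_one_add_sq_rpow (s := -2 / 3) (by norm_num)).mul_left (2 * C)).of_nonneg_of_le
    (fun b => by positivity) fun b => ?_
  have hb : 0 < 1 + (b : ℝ) ^ 2 := by positivity
  calc ((b ^ 2 - D).divisorsAntidiag.card : ℝ) * (1 + (b : ℝ) ^ 2)⁻¹
      ≤ 2 * (C * (1 + (b : ℝ) ^ 2) ^ (1 / 3 : ℝ)) * (1 + (b : ℝ) ^ 2)⁻¹ := by
        rw [card_int_divisorsAntidiag]
        push_cast
        gcongr
        exact hC b
    _ = 2 * C * ((1 + (b : ℝ) ^ 2) ^ (1 / 3 : ℝ) * (1 + (b : ℝ) ^ 2) ^ (-1 : ℝ)) := by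
        rw [Real.rpow_neg_one]; ring
    _ = 2 * C * (1 + (b : ℝ) ^ 2) ^ (-2 / 3 : ℝ) := by rw [← Real.rpow_add hb]; norm_num

theorem summable_QD_one_add_sq_inv {D : ℤ} (hD : ¬∃ m : ℤ, m ^ 2 = D) :
    Summable fun q : QD D => (1 + (q.1.2.1 : ℝ) ^ 2)⁻¹ := by
  have mem_divisors (q : QD D) :
      (q.1.1, 4 * q.1.2.2) ∈ (q.1.2.1 ^ 2 - D).divisorsAntidiag := by
    rw [Int.mem_divisorsAntidiag]
    have hq : q.1.2.1 ^ 2 - 4 * q.1.1 * q.1.2.2 = D := q.2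
    exact ⟨by linear_combination -hq, fun h => hD ⟨_, sub_eq_zero.mp h⟩⟩
  let toDivisors (q : QD D) : Σ b : ℤ, (b ^ 2 - D).divisorsAntidiag :=
    ⟨q.1.2.1, (q.1.1, 4 * q.1.2.2), mem_divisors q⟩
  have injective : Function.Injective toDivisors := by
    intro q q' h
    have hb : q.1.2.1 = q'.1.2.1 := congrArg Sigma.fst h
    have hac : (q.1.1, 4 * q.1.2.2) = (q'.1.1, 4 * q'.1.2.2) := congrArg (fun x => x.2.1) h
    obtain ⟨ha, hc⟩ := Prod.mk.inj hac
    exact Subtype.ext (Prod.ext ha (Prod.ext hb (by omega)))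
  have summable_divisors : Summable fun x : Σ b : ℤ, (b ^ 2 - D).divisorsAntidiag =>
      (1 + (x.1 : ℝ) ^ 2)⁻¹ :=
    summable_sigma_finset_of_nonneg (f := fun b : ℤ => (1 + (b : ℝ) ^ 2)⁻¹)
      (fun b => by positivity) (summable_card_divisorsAntidiag_sq_sub D)
  simpa only [Function.comp_def, toDivisors] using summable_divisors.comp_injective injective

end Summability

section Convergence

theorem intervalIntegrable_one_sub_rpow {r : ℝ} (hr : -1 < r) (a b : ℝ) :
    IntervalIntegrable (fun u : ℝ => (1 - u) ^ r) MeasureTheory.volume a b := by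
  simpa using (intervalIntegral.intervalIntegrable_rpow' (a := 1 - a) (b := 1 - b)
    hr).comp_sub_left 1

theorem integral_one_sub_rpow_neg_half_le {v : ℝ} (h0 : 0 ≤ v) (h1 : v ≤ 1) :
    ∫ u in (0 : ℝ)..v, (1 - u) ^ (-(1 : ℝ) / 2) ≤ 2 * v := by
  have eval : ∫ u in (0 : ℝ)..v, (1 - u) ^ (-(1 : ℝ) / 2) = 2 * (1 - √(1 - v)) := by
    rw [intervalIntegral.integral_comp_sub_left (fun x => x ^ (-(1 : ℝ) / 2)) 1,
      integral_rpow (Or.inl (by norm_num)), Real.sqrt_eq_rpow]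
    norm_num
    ring
  have le_sqrt : 1 - v ≤ √(1 - v) := Real.le_sqrt_of_sq_le (by nlinarith)
  linarith

theorem abs_psi_sq_le {k : ℕ} (hk : 2 ≤ k) {t : ℝ} (h0 : 0 ≤ t) (h1 : t ≤ 1) :
    |psi k (t ^ 2)| ≤ t ^ (2 * k - 1) := by
  have hk' : (2 : ℝ) ≤ k := by exact_mod_cast hk
  have ht : t ^ 2 ≤ 1 := pow_le_one₀ h0 h1
  have rpow_eq : (t ^ 2) ^ ((k : ℝ) - 3 / 2) = t ^ (2 * k - 3) := by
    rw [← Real.rpow_natCast, ← Real.rpow_mul h0, ← Real.rpow_natCast,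
      Nat.cast_sub (by omega : 3 ≤ 2 * k)]
    congr 1
    push_cast
    ring
  have integral_le : ‖∫ u in (0 : ℝ)..t ^ 2,
      u ^ ((k : ℝ) - 3 / 2) * (1 - u) ^ (-(1 : ℝ) / 2)‖ ≤
        ∫ u in (0 : ℝ)..t ^ 2, t ^ (2 * k - 3) * (1 - u) ^ (-(1 : ℝ) / 2) := by
    refine intervalIntegral.norm_integral_le_of_norm_le (sq_nonneg t)
      (Filter.Eventually.of_forall fun u hu => ?_)
      ((intervalIntegrable_one_sub_rpow (by norm_num) _ _).const_mul _)
    have hu1 : 0 ≤ 1 - u := by linarith [hu.2]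
    rw [norm_mul, Real.norm_of_nonneg (Real.rpow_nonneg hu1 _),
      Real.norm_of_nonneg (Real.rpow_nonneg hu.1.le _), ← rpow_eq]
    gcongr
    exacts [hu.1.le, by linarith, hu.2]
  calc |psi k (t ^ 2)|
      = 1 / 2 * ‖∫ u in (0 : ℝ)..t ^ 2, u ^ ((k : ℝ) - 3 / 2) * (1 - u) ^ (-(1 : ℝ) / 2)‖ := by
        rw [psi, abs_mul, abs_of_nonneg one_half_pos.le, Real.norm_eq_abs]
    _ ≤ 1 / 2 * (t ^ (2 * k - 3) * (2 * t ^ 2)) := by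
        gcongr
        refine integral_le.trans ?_
        rw [intervalIntegral.integral_const_mul]
        gcongr
        exact integral_one_sub_rpow_neg_half_le (sq_nonneg t) ht
    _ = t ^ (2 * k - 1) := by
        rw [show 2 * k - 1 = 2 * k - 3 + 2 by omega, pow_add]
        ring

section

variable {D : ℤ} {q : ℤ × ℤ × ℤ} (τ : ℂ)

theorem normSq_Qval (hq : q ∈ QD D) :
    Complex.normSq (Qval q τ) = Qell q τ ^ 2 + D * τ.im ^ 2 := by
  have disc : (q.2.1 : ℝ) ^ 2 - 4 * q.1 * q.2.2 = D := by
    exact_mod_cast (show q.2.1 ^ 2 - 4 * q.1 * q.2.2 = D from hq)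
  simp only [← disc, Qval, Qell, Complex.normSq_apply, Complex.add_re, Complex.add_im,
    Complex.mul_re, Complex.mul_im, pow_two, Complex.intCast_re, Complex.intCast_im]
  ring

theorem Qell_sub_Qval_re : Qell q τ - (Qval q τ).re = 2 * q.1 * τ.im ^ 2 := by
  simp only [Qval, Qell, Complex.normSq_apply, Complex.add_re, Complex.mul_re,
    Complex.mul_im, pow_two, Complex.intCast_re, Complex.intCast_im]
  ring

theorem Qval_im : (Qval q τ).im = (2 * q.1 * τ.re + q.2.1) * τ.im := by
  simp only [Qval, Complex.add_im, Complex.mul_re,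
    Complex.mul_im, pow_two, Complex.intCast_re, Complex.intCast_im]
  ring

variable {τ}

theorem abs_Qell_le_norm_Qval (hD : 0 ≤ D) (hq : q ∈ QD D) : |Qell q τ| ≤ ‖Qval q τ‖ := by
  refine abs_le_of_sq_le_sq ?_ (norm_nonneg _)
  rw [← Complex.normSq_eq_norm_sq, normSq_Qval τ hq, le_add_iff_nonneg_right]
  have : (0 : ℝ) ≤ D := Int.cast_nonneg hD
  positivity

theorem mul_sq_im_le_normSq_Qval (hq : q ∈ QD D) :
    D * τ.im ^ 2 ≤ Complex.normSq (Qval q τ) := by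
  rw [normSq_Qval τ hq]
  exact le_add_of_nonneg_left (sq_nonneg _)

theorem abs_leading_coeff_mul_le (hD : 0 ≤ D) (hq : q ∈ QD D) :
    |(q.1 : ℝ)| * τ.im ^ 2 ≤ ‖Qval q τ‖ := by
  have : |2 * (q.1 : ℝ) * τ.im ^ 2| ≤ ‖Qval q τ‖ + ‖Qval q τ‖ := by
    rw [← Qell_sub_Qval_re]
    exact (abs_sub _ _).trans
      (add_le_add (abs_Qell_le_norm_Qval hD hq) (Complex.abs_re_le_norm _))
  rw [abs_mul, abs_mul, abs_two, abs_of_nonneg (sq_nonneg τ.im)] at this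
  linarith

theorem abs_middle_coeff_le (hD : 0 ≤ D) (hq : q ∈ QD D) (hτ : 0 < τ.im) :
    |(q.2.1 : ℝ)| ≤ (1 / τ.im + 2 * |τ.re| / τ.im ^ 2) * ‖Qval q τ‖ := by
  have abs_a_le : |(q.1 : ℝ)| ≤ ‖Qval q τ‖ / τ.im ^ 2 := by
    rw [le_div_iff₀ (by positivity)]
    exact abs_leading_coeff_mul_le hD hq
  have abs_im_le : |2 * (q.1 : ℝ) * τ.re + q.2.1| ≤ ‖Qval q τ‖ / τ.im := by
    have := Complex.abs_im_le_norm (Qval q τ)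
    rwa [Qval_im, abs_mul, abs_of_pos hτ, ← le_div_iff₀ hτ] at this
  calc |(q.2.1 : ℝ)| = |(2 * (q.1 : ℝ) * τ.re + q.2.1) - 2 * (q.1 : ℝ) * τ.re| := by ring_nf
    _ ≤ |2 * (q.1 : ℝ) * τ.re + q.2.1| + |2 * (q.1 : ℝ) * τ.re| := abs_sub _ _
    _ = |2 * (q.1 : ℝ) * τ.re + q.2.1| + 2 * |(q.1 : ℝ)| * |τ.re| := by
        rw [abs_mul, abs_mul, abs_two]
    _ ≤ ‖Qval q τ‖ / τ.im + 2 * (‖Qval q τ‖ / τ.im ^ 2) * |τ.re| := by gcongr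
    _ = (1 / τ.im + 2 * |τ.re| / τ.im ^ 2) * ‖Qval q τ‖ := by ring

theorem normSq_Qval_inv_le (hD : 0 < D) (hq : q ∈ QD D) (hτ : 0 < τ.im) :
    (Complex.normSq (Qval q τ))⁻¹ ≤
      (1 / (D * τ.im ^ 2) + (1 / τ.im + 2 * |τ.re| / τ.im ^ 2) ^ 2) *
        (1 + (q.2.1 : ℝ) ^ 2)⁻¹ := by
  have : (0 : ℝ) < D := Int.cast_pos.mpr hD
  set M := 1 / τ.im + 2 * |τ.re| / τ.im ^ 2
  set N := Complex.normSq (Qval q τ) with hN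
  have le_N : D * τ.im ^ 2 ≤ N := mul_sq_im_le_normSq_Qval hq
  have one_le : 1 ≤ 1 / (D * τ.im ^ 2) * N := by
    rwa [one_div_mul_eq_div, one_le_div (by positivity)]
  have sq_le : (q.2.1 : ℝ) ^ 2 ≤ M ^ 2 * N := by
    rw [hN, Complex.normSq_eq_norm_sq, ← mul_pow, ← sq_abs]
    gcongr
    exact abs_middle_coeff_le hD.le hq hτ
  have N_pos : 0 < N := lt_of_lt_of_le (by positivity) le_N
  rw [← div_eq_mul_inv, le_div_iff₀ (by positivity), inv_mul_le_iff₀ N_pos]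
  linarith

theorem norm_Fsummand_le {k : ℕ} (hk : 2 ≤ k) (hD : 0 < D) (hq : q ∈ QD D) (hτ : 0 < τ.im) :
    ‖Fsummand k D τ q‖ ≤ √(D * τ.im ^ 2) ^ (k + 1) * (Complex.normSq (Qval q τ))⁻¹ := by
  have : (0 : ℝ) < D := Int.cast_pos.mpr hD
  set s : ℝ := √(D * τ.im ^ 2)
  have s_pos : 0 < s := by positivity
  have s_sq : s ^ 2 = D * τ.im ^ 2 := Real.sq_sqrt (by positivity)
  have s_le : s ≤ ‖Qval q τ‖ := by
    refine Real.sqrt_le_iff.mpr ⟨norm_nonneg _, ?_⟩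
    exact (mul_sq_im_le_normSq_Qval hq).trans_eq (Complex.normSq_eq_norm_sq _)
  have norm_pos : 0 < ‖Qval q τ‖ := s_pos.trans_le s_le
  have abs_sign_le : |Real.sign (Qell q τ)| ≤ 1 := by
    rcases Real.sign_apply_eq (Qell q τ) with h | h | h <;> simp [h]
  have ratio_le : s / ‖Qval q τ‖ ≤ 1 := (div_le_one norm_pos).mpr s_le
  calc ‖Fsummand k D τ q‖
      = |Real.sign (Qell q τ)| * ‖Qval q τ‖ ^ (k - 1) * |psi k ((s / ‖Qval q τ‖) ^ 2)| := by
        rw [Fsummand, norm_mul, norm_mul, norm_pow, Complex.norm_real, Complex.norm_real,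
          Real.norm_eq_abs, Real.norm_eq_abs, div_pow, s_sq, Complex.normSq_eq_norm_sq]
    _ ≤ 1 * ‖Qval q τ‖ ^ (k - 1) * (s / ‖Qval q τ‖) ^ (k + 1) := by
        gcongr
        exact (abs_psi_sq_le hk (by positivity) ratio_le).trans
          (pow_le_pow_of_le_one (by positivity) ratio_le (by omega))
    _ = s ^ (k + 1) * (Complex.normSq (Qval q τ))⁻¹ := by
        obtain ⟨j, rfl⟩ : ∃ j, k = j + 1 := ⟨k - 1, by omega⟩
        rw [Complex.normSq_eq_norm_sq, Nat.add_sub_cancel, div_pow]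
        field_simp
        ring

theorem summable_Fsummand {k : ℕ} (hk : 2 ≤ k) (hD : 0 < D) (hDsq : ¬∃ m : ℤ, m ^ 2 = D)
    (hτ : 0 < τ.im) : Summable fun q : QD D => Fsummand k D τ q := by
  refine .of_norm_bounded
    (g := fun q : QD D => √(D * τ.im ^ 2) ^ (k + 1) *
      ((1 / (D * τ.im ^ 2) + (1 / τ.im + 2 * |τ.re| / τ.im ^ 2) ^ 2) *
        (1 + (q.1.2.1 : ℝ) ^ 2)⁻¹))
    (((summable_QD_one_add_sq_inv hDsq).mul_left _).mul_left _) fun q => ?_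
  refine (norm_Fsummand_le hk hD q.2 hτ).trans ?_
  gcongr
  exact normSq_Qval_inv_le hD q.2 hτ

end

end Convergence

section RootCount

theorem card_quadratic_roots {K : Type*} [Field K] [Fintype K] [DecidableEq K]
    (hK : ringChar K ≠ 2) {a : K} (ha : a ≠ 0) (b c : K) :
    (Finset.card {x : K | a * (x * x) + b * x + c = 0} : ℤ) =
      quadraticChar K (discrim a b c) + 1 := by
  have : NeZero (2 : K) := ⟨Ring.two_ne_zero hK⟩
  have h2a : 2 * a ≠ 0 := mul_ne_zero two_ne_zero ha
  rw [← quadraticChar_card_sqrts hK]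
  congr 1
  refine Finset.card_bij (fun x _ => 2 * a * x + b) ?_ ?_ ?_
  · intro x hx
    simpa [quadratic_eq_zero_iff_discrim_eq_sq ha, eq_comm] using hx
  · intro x _ y _ h
    exact mul_left_cancel₀ h2a (add_right_cancel h)
  · intro s hs
    have hs : s ^ 2 = discrim a b c := by simpa using hs
    have eval : 2 * a * ((s - b) / (2 * a)) + b = s := by field_simp; ring
    refine ⟨(s - b) / (2 * a), ?_, eval⟩
    simp [quadratic_eq_zero_iff_discrim_eq_sq ha, eval, hs]

theorem card_projective_quadratic_roots {K : Type*} [Field K] [Fintype K] [DecidableEq K]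
    (hK : ringChar K ≠ 2) {a b c : K} (h : ¬(a = 0 ∧ b = 0 ∧ c = 0)) :
    ((if a = 0 then 1 else 0) + Finset.card {x : K | a * (x * x) + b * x + c = 0} : ℤ) =
      quadraticChar K (discrim a b c) + 1 := by
  rcases eq_or_ne a 0 with rfl | ha
  · rcases eq_or_ne b 0 with rfl | hb
    · simp_all [discrim]
    · have root_iff (x : K) : b * x + c = 0 ↔ x = -c / b := by
        rw [eq_div_iff hb, eq_neg_iff_add_eq_zero, mul_comm]
      simp [discrim, root_iff, quadraticChar_sq_one' hb, Finset.filter_eq']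
  · rw [if_neg ha, zero_add, card_quadratic_roots hK ha]

theorem card_filter_range_natCast_zmod (n : ℕ) [NeZero n] (P : ZMod n → Prop) [DecidablePred P] :
    ((Finset.range n).filter fun r : ℕ => P r).card = Finset.card {x : ZMod n | P x} := by
  refine Finset.card_nbij' (fun r => (r : ZMod n)) ZMod.val ?_ ?_ ?_ ?_
  · intro r
    simp
  · intro x
    simp [ZMod.val_lt]
  · intro r hr
    exact ZMod.val_natCast_of_lt (Finset.mem_range.mp (Finset.mem_filter.mp hr).1)
  · intro x _
    exact ZMod.natCast_zmod_val x

/-- The number of zeros in `ℙ¹(𝔽_p)` of the form `[a, b, c]`: the point at infinity `(1 : 0)`,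
and the points `(-r : 1)` with `0 ≤ r < p`. -/
def projRootCount (p : ℕ) (q : ℤ × ℤ × ℤ) : ℕ :=
  (if (p : ℤ) ∣ q.1 then 1 else 0) +
    ((Finset.range p).filter fun r : ℕ => (p : ℤ) ∣ q.2.2 - q.2.1 * r + q.1 * r ^ 2).card

theorem legSym_eq_legendreSym (D : ℤ) {p : ℕ} [Fact p.Prime] (hp : p ≠ 2) :
    legSym D p = legendreSym p D := by
  rw [legSym]
  split_ifs with hdvd hsq
  · rw [(legendreSym.eq_zero_iff p D).mpr ((ZMod.intCast_zmod_eq_zero_iff_dvd D p).mpr hdvd)]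
  · have hD : (D : ZMod p) ≠ 0 := fun h => hdvd ((ZMod.intCast_zmod_eq_zero_iff_dvd D p).mp h)
    obtain ⟨m, hm⟩ := hsq
    have hm : ((m ^ 2 - D : ℤ) : ZMod p) = 0 := (ZMod.intCast_zmod_eq_zero_iff_dvd _ p).mpr hm
    push_cast at hm
    exact ((legendreSym.eq_one_iff p hD).mpr ⟨m, by linear_combination -hm⟩).symm
  · refine ((legendreSym.eq_neg_one_iff p).mpr ?_).symm
    rintro ⟨x, hx⟩
    obtain ⟨m, rfl⟩ := ZMod.intCast_surjective x
    refine hsq ⟨m, (ZMod.intCast_zmod_eq_zero_iff_dvd _ p).mp ?_⟩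
    push_cast
    linear_combination -hx

theorem projRootCount_two {D : ℤ} {q : ℤ × ℤ × ℤ} (hq : q ∈ QD D)
    (h : ¬(2 ∣ q.1 ∧ 2 ∣ q.2.1 ∧ 2 ∣ q.2.2)) : (projRootCount 2 q : ℤ) = 1 + legSym D 2 := by
  obtain ⟨a, b, c⟩ := q
  have hq : b ^ 2 - 4 * (a * c) = D := by rw [← mul_assoc]; exact hq
  have count : projRootCount 2 (a, b, c) =
      (if (2 : ℤ) ∣ a then 1 else 0) +
        ((if (2 : ℤ) ∣ c then 1 else 0) + if (2 : ℤ) ∣ c - b + a then 1 else 0) := by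
    rw [projRootCount, Finset.card_filter, Finset.sum_range_succ, Finset.sum_range_one]
    simp
  have even_mul : 2 ∣ a * c ↔ 2 ∣ a ∨ 2 ∣ c := Int.prime_two.dvd_mul
  rw [count, legSym]
  rcases Int.even_or_odd b with hb | hb
  · have dvd_D : (2 : ℤ) ∣ D := by
      rw [← hq]
      exact dvd_sub (dvd_pow hb.two_dvd two_ne_zero) (Dvd.intro _ (by ring : 2 * (2 * (a * c)) = _))
    have := hb.two_dvd
    rw [Nat.cast_ofNat, if_pos dvd_D]
    dsimp only at h
    push_cast
    split_ifs <;> omega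
  · have sq_mod : 8 ∣ b ^ 2 - 1 := Int.eight_dvd_sq_sub_one_of_odd hb
    have := Int.two_dvd_ne_zero.mpr (Int.odd_iff.mp hb)
    dsimp only at h
    push_cast
    split_ifs <;> omega

theorem projRootCount_eq_one_add_legSym {p : ℕ} (hp : p.Prime) {D : ℤ} {q : ℤ × ℤ × ℤ}
    (hq : q ∈ QD D) (h : ¬((p : ℤ) ∣ q.1 ∧ (p : ℤ) ∣ q.2.1 ∧ (p : ℤ) ∣ q.2.2)) :
    (projRootCount p q : ℤ) = 1 + legSym D p := by
  rcases eq_or_ne p 2 with rfl | hp2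
  · exact projRootCount_two hq h
  obtain ⟨a, b, c⟩ := q
  have hq : b ^ 2 - 4 * a * c = D := hq
  have : Fact p.Prime := ⟨hp⟩
  simp only [← ZMod.intCast_zmod_eq_zero_iff_dvd] at h
  have disc : discrim (a : ZMod p) (-b) c = D := by
    rw [← hq, discrim]
    push_cast
    ring
  have affine : ((Finset.range p).filter fun r : ℕ => (p : ℤ) ∣ c - b * r + a * r ^ 2).card =
      Finset.card {x : ZMod p | (a : ZMod p) * (x * x) + -b * x + c = 0} := by
    rw [← card_filter_range_natCast_zmod]
    congr 2 with r
    rw [← ZMod.intCast_zmod_eq_zero_iff_dvd]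
    push_cast
    ring_nf
  rw [legSym_eq_legendreSym D hp2, legendreSym, ← disc, add_comm,
    ← card_projective_quadratic_roots (by rwa [ZMod.ringChar_zmod_n]) (by simpa using h),
    projRootCount, affine]
  simp [ZMod.intCast_zmod_eq_zero_iff_dvd]

theorem projRootCount_of_dvd {p : ℕ} {q : ℤ × ℤ × ℤ} (ha : (p : ℤ) ∣ q.1)
    (hb : (p : ℤ) ∣ q.2.1) (hc : (p : ℤ) ∣ q.2.2) : projRootCount p q = 1 + p := by
  rw [projRootCount, if_pos ha, Finset.filter_true_of_mem, Finset.card_range]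
  exact fun r _ => dvd_add (dvd_sub hc (hb.mul_right _)) (ha.mul_right _)

end RootCount

section Substitution

/-- The form `Q(αX + βY, δY)`, that is, `Q` composed with the matrix `(α β; 0 δ)`. -/
def upperSubst (α β δ : ℤ) (q : ℤ × ℤ × ℤ) : ℤ × ℤ × ℤ :=
  (q.1 * α ^ 2, 2 * q.1 * α * β + q.2.1 * α * δ,
    q.1 * β ^ 2 + q.2.1 * β * δ + q.2.2 * δ ^ 2)

theorem upperSubst_injective {α δ : ℤ} (hα : α ≠ 0) (β : ℤ) (hδ : δ ≠ 0) :
    Function.Injective (upperSubst α β δ) := by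
  rintro ⟨a, b, c⟩ ⟨a', b', c'⟩ h
  simp only [upperSubst, Prod.mk.injEq] at h
  obtain ⟨ha, hb, hc⟩ := h
  obtain rfl := mul_right_cancel₀ (pow_ne_zero 2 hα) ha
  obtain rfl := mul_right_cancel₀ hα (mul_right_cancel₀ hδ (add_left_cancel hb))
  obtain rfl := mul_right_cancel₀ (pow_ne_zero 2 hδ) (add_left_cancel hc)
  rfl

theorem upperSubst_mem_QD_iff {α δ : ℤ} (hα : α ≠ 0) (β : ℤ) (hδ : δ ≠ 0) {D : ℤ}
    {q : ℤ × ℤ × ℤ} : upperSubst α β δ q ∈ QD (D * (α * δ) ^ 2) ↔ q ∈ QD D := by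
  have disc : (2 * q.1 * α * β + q.2.1 * α * δ) ^ 2 -
      4 * (q.1 * α ^ 2) * (q.1 * β ^ 2 + q.2.1 * β * δ + q.2.2 * δ ^ 2) =
        (q.2.1 ^ 2 - 4 * q.1 * q.2.2) * (α * δ) ^ 2 := by ring
  simp only [QD, upperSubst, Set.mem_ofPred_eq, disc]
  exact mul_left_inj' (pow_ne_zero 2 (mul_ne_zero hα hδ))

theorem smul_mem_QD_iff {m : ℤ} (hm : m ≠ 0) {D : ℤ} {q : ℤ × ℤ × ℤ} :
    m • q ∈ QD (D * m ^ 2) ↔ q ∈ QD D := by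
  have disc : (m * q.2.1) ^ 2 - 4 * (m * q.1) * (m * q.2.2) =
      (q.2.1 ^ 2 - 4 * q.1 * q.2.2) * m ^ 2 := by ring
  simp only [QD, Prod.smul_fst, Prod.smul_snd, smul_eq_mul, Set.mem_ofPred_eq, disc]
  exact mul_left_inj' (pow_ne_zero 2 hm)

variable {m D : ℤ} {q : ℤ × ℤ × ℤ}

theorem mem_image_upperSubst_dilation_iff (hm : m ≠ 0) :
    q ∈ upperSubst m 0 1 '' QD D ↔ q ∈ QD (D * m ^ 2) ∧ m ^ 2 ∣ q.1 ∧ m ∣ q.2.1 := by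
  have mem_iff {x : ℤ × ℤ × ℤ} : upperSubst m 0 1 x ∈ QD (D * m ^ 2) ↔ x ∈ QD D := by
    simpa using upperSubst_mem_QD_iff (D := D) (q := x) hm 0 one_ne_zero
  constructor
  · rintro ⟨x, hx, rfl⟩
    exact ⟨mem_iff.mpr hx, ⟨x.1, by simp [upperSubst, mul_comm]⟩,
      ⟨x.2.1, by simp [upperSubst, mul_comm]⟩⟩
  · obtain ⟨A, B, C⟩ := q
    rintro ⟨hq, ⟨a, rfl⟩, ⟨b, rfl⟩⟩
    have eq : upperSubst m 0 1 (a, b, C) = (m ^ 2 * a, m * b, C) := by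
      simp [upperSubst, mul_comm]
    exact ⟨(a, b, C), mem_iff.mp (eq ▸ hq), eq⟩

theorem mem_image_upperSubst_translation_iff (hm : m ≠ 0) (r : ℤ) :
    q ∈ upperSubst 1 r m '' QD D ↔ q ∈ QD (D * m ^ 2) ∧ m ∣ q.2.1 - 2 * q.1 * r ∧
      m ^ 2 ∣ q.2.2 - q.2.1 * r + q.1 * r ^ 2 := by
  have mem_iff {x : ℤ × ℤ × ℤ} : upperSubst 1 r m x ∈ QD (D * m ^ 2) ↔ x ∈ QD D := by
    simpa using upperSubst_mem_QD_iff (D := D) (q := x) one_ne_zero r hm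
  constructor
  · rintro ⟨x, hx, rfl⟩
    exact ⟨mem_iff.mpr hx, ⟨x.2.1, by simp only [upperSubst]; ring⟩,
      ⟨x.2.2, by simp only [upperSubst]; ring⟩⟩
  · obtain ⟨A, B, C⟩ := q
    rintro ⟨hq, ⟨b, hb⟩, ⟨c, hc⟩⟩
    have eq : upperSubst 1 r m (A, b, c) = (A, B, C) := by
      simp only [upperSubst, Prod.mk.injEq]
      dsimp only at hb hc
      exact ⟨by ring, by linear_combination -hb, by linear_combination -hc - r * hb⟩
    exact ⟨(A, b, c), mem_iff.mp (eq ▸ hq), eq⟩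

theorem mem_image_smul_iff (hm : m ≠ 0) :
    q ∈ (fun x : ℤ × ℤ × ℤ => m • x) '' QD D ↔
      q ∈ QD (D * m ^ 2) ∧ m ∣ q.1 ∧ m ∣ q.2.1 ∧ m ∣ q.2.2 := by
  constructor
  · rintro ⟨x, hx, rfl⟩
    exact ⟨(smul_mem_QD_iff hm).mpr hx, Dvd.intro _ rfl, Dvd.intro _ rfl, Dvd.intro _ rfl⟩
  · obtain ⟨A, B, C⟩ := q
    rintro ⟨hq, ⟨a, rfl⟩, ⟨b, rfl⟩, ⟨c, rfl⟩⟩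
    exact ⟨(a, b, c), (smul_mem_QD_iff hm).mp hq, rfl⟩

theorem smul_mem_image_smul_smul_iff (hm : m ≠ 0) (hq : q ∈ QD D) :
    m • q ∈ (fun x : ℤ × ℤ × ℤ => m • m • x) '' ((fun x => m • x) ⁻¹' QD D) ↔
      m ∣ q.1 ∧ m ∣ q.2.1 ∧ m ∣ q.2.2 := by
  constructor
  · rintro ⟨x, -, hx⟩
    obtain rfl := smul_right_injective _ hm hx
    exact ⟨Dvd.intro _ rfl, Dvd.intro _ rfl, Dvd.intro _ rfl⟩
  · obtain ⟨A, B, C⟩ := q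
    rintro ⟨⟨a, rfl⟩, ⟨b, rfl⟩, ⟨c, rfl⟩⟩
    exact ⟨(a, b, c), hq, rfl⟩

end Substitution

section Multiplicity

open scoped Classical in
/-- The number of matrices among `(p 0; 0 1)` and `(1 r; 0 p)`, `0 ≤ r < p`, through which the form
`Q` factors as a substitution into an integral form of discriminant `D`. -/
noncomputable def heckeMult (D : ℤ) (p : ℕ) (q : ℤ × ℤ × ℤ) : ℕ :=
  (if q ∈ upperSubst p 0 1 '' QD D then 1 else 0) +
    ((Finset.range p).filter fun r : ℕ => q ∈ upperSubst 1 r p '' QD D).card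

theorem dvd_of_disc_eq_mul_sq {p a b c D : ℤ} (hp : Prime p)
    (hdisc : b ^ 2 - 4 * a * c = D * p ^ 2) (hc : p ∣ c) : p ∣ b := by
  have : p ∣ b ^ 2 := by
    rw [sub_eq_iff_eq_add.mp hdisc]
    exact dvd_add ((dvd_pow_self p two_ne_zero).mul_left D) (hc.mul_left _)
  exact hp.dvd_of_dvd_pow this

theorem sq_dvd_of_disc_eq_mul_sq {p : ℕ} {a b c D : ℤ} (hp : p.Prime)
    (hD4 : D % 4 = 0 ∨ D % 4 = 1) (hdisc : b ^ 2 - 4 * a * c = D * p ^ 2)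
    (ha : ¬(p : ℤ) ∣ a) (hc : (p : ℤ) ∣ c) : (p : ℤ) ^ 2 ∣ c := by
  have hpZ : Prime (p : ℤ) := Nat.prime_iff_prime_int.mp hp
  obtain ⟨β, rfl⟩ := dvd_of_disc_eq_mul_sq hpZ hdisc hc
  have coprime_a : IsCoprime ((p : ℤ) ^ 2) a := (hpZ.coprime_iff_not_dvd.mpr ha).pow_left
  have dvd_ac : (p : ℤ) ^ 2 ∣ a * c := by
    rcases eq_or_ne p 2 with rfl | hp2
    · have hac : a * c = β ^ 2 - D := by push_cast at hdisc; linarith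
      have even_ac : 2 ∣ a * c := hc.mul_left a
      rcases Int.even_or_odd β with hβ | hβ
      · have := pow_dvd_pow_of_dvd hβ.two_dvd 2
        push_cast
        omega
      · have := Int.sq_mod_four_eq_one_of_odd hβ
        push_cast
        omega
    · have coprime_four : IsCoprime ((p : ℤ) ^ 2) (2 ^ 2) :=
        (Nat.isCoprime_iff_coprime.mpr (hp.coprime_iff_not_dvd.mpr fun h =>
          hp2 ((Nat.prime_dvd_prime_iff_eq hp Nat.prime_two).mp h))).pow
      exact coprime_four.dvd_of_dvd_mul_left ⟨β ^ 2 - D, by linear_combination -hdisc⟩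
  exact coprime_a.dvd_of_dvd_mul_left dvd_ac

variable {p : ℕ} {D : ℤ} {q : ℤ × ℤ × ℤ}

theorem heckeMult_of_not_dvd (hp : p.Prime) (hD4 : D % 4 = 0 ∨ D % 4 = 1)
    (hq : q ∈ QD (D * p ^ 2)) (h : ¬((p : ℤ) ∣ q.1 ∧ (p : ℤ) ∣ q.2.1 ∧ (p : ℤ) ∣ q.2.2)) :
    heckeMult D p q = projRootCount p q := by
  have hpZ : Prime (p : ℤ) := Nat.prime_iff_prime_int.mp hp
  obtain ⟨a, b, c⟩ := q
  have hdisc : b ^ 2 - 4 * a * c = D * p ^ 2 := hq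
  have mem_infty : (a, b, c) ∈ upperSubst p 0 1 '' QD D ↔ (p : ℤ) ∣ a := by
    rw [mem_image_upperSubst_dilation_iff hpZ.ne_zero]
    refine ⟨fun h => (dvd_pow_self _ two_ne_zero).trans h.2.1, fun ha => ?_⟩
    have hdisc' : b ^ 2 - 4 * c * a = D * p ^ 2 := by rw [← hdisc]; ring
    have hb := dvd_of_disc_eq_mul_sq hpZ hdisc' ha
    exact ⟨hq, sq_dvd_of_disc_eq_mul_sq hp hD4 hdisc' (fun hc => h ⟨ha, hb, hc⟩) ha, hb⟩
  have mem_translate (r : ℕ) :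
      (a, b, c) ∈ upperSubst 1 r p '' QD D ↔ (p : ℤ) ∣ c - b * r + a * r ^ 2 := by
    rw [mem_image_upperSubst_translation_iff hpZ.ne_zero]
    refine ⟨fun h => (dvd_pow_self _ two_ne_zero).trans h.2.2, fun hc => ?_⟩
    have hdisc' : (b - 2 * a * r) ^ 2 - 4 * a * (c - b * r + a * r ^ 2) = D * p ^ 2 := by
      rw [← hdisc]; ring
    have hb := dvd_of_disc_eq_mul_sq hpZ hdisc' hc
    refine ⟨hq, hb, sq_dvd_of_disc_eq_mul_sq hp hD4 hdisc' (fun ha => ?_) hc⟩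
    have hb' : (p : ℤ) ∣ b := (dvd_sub_left ((ha.mul_left 2).mul_right _)).mp hb
    exact h ⟨ha, hb', (dvd_sub_left (hb'.mul_right _)).mp ((dvd_add_left (ha.mul_right _)).mp hc)⟩
  simp only [heckeMult, projRootCount, mem_infty, mem_translate]

theorem heckeMult_smul (hp : p.Prime) (hq : q ∈ QD D) :
    heckeMult D p ((p : ℤ) • q) = projRootCount p q := by
  have hp0 : (p : ℤ) ≠ 0 := Int.natCast_ne_zero.mpr hp.ne_zero
  have hq' := (smul_mem_QD_iff hp0).mpr hq
  have mem_infty : (p : ℤ) • q ∈ upperSubst p 0 1 '' QD D ↔ (p : ℤ) ∣ q.1 := by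
    rw [mem_image_upperSubst_dilation_iff hp0, and_iff_right hq', sq]
    simp [mul_dvd_mul_iff_left hp0]
  have mem_translate (r : ℕ) : (p : ℤ) • q ∈ upperSubst 1 r p '' QD D ↔
      (p : ℤ) ∣ q.2.2 - q.2.1 * r + q.1 * r ^ 2 := by
    have factor : p * q.2.2 - p * q.2.1 * r + p * q.1 * (r : ℤ) ^ 2 =
      p * (q.2.2 - q.2.1 * r + q.1 * r ^ 2) := by ring
    have dvd_middle : (p : ℤ) ∣ p * q.2.1 - 2 * (p * q.1) * r :=
      ⟨q.2.1 - 2 * q.1 * r, by ring⟩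
    rw [mem_image_upperSubst_translation_iff hp0, and_iff_right hq']
    simp only [Prod.smul_fst, Prod.smul_snd, smul_eq_mul, factor, dvd_middle, sq (p : ℤ),
      mul_dvd_mul_iff_left hp0, true_and]
  simp only [heckeMult, projRootCount, mem_infty, mem_translate]

open scoped Classical in
theorem heckeMult_eq (hp : p.Prime) (hD4 : D % 4 = 0 ∨ D % 4 = 1) (hq : q ∈ QD (D * p ^ 2)) :
    (heckeMult D p q : ℤ) = 1 +
      legSym D p * (if q ∈ (fun x : ℤ × ℤ × ℤ => (p : ℤ) • x) '' QD D then 1 else 0) +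
      p * (if q ∈ (fun x : ℤ × ℤ × ℤ => (p : ℤ) • (p : ℤ) • x) ''
        ((fun x => (p : ℤ) • x) ⁻¹' QD D) then 1 else 0) := by
  have hp0 : (p : ℤ) ≠ 0 := Int.natCast_ne_zero.mpr hp.ne_zero
  by_cases hdvd : (p : ℤ) ∣ q.1 ∧ (p : ℤ) ∣ q.2.1 ∧ (p : ℤ) ∣ q.2.2
  · obtain ⟨x, hx, rfl⟩ := (mem_image_smul_iff hp0).mpr ⟨hq, hdvd⟩
    rw [heckeMult_smul hp hx, if_pos (Set.mem_image_of_mem _ hx), mul_one]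
    simp only [smul_mem_image_smul_smul_iff hp0 hx]
    split_ifs with hx_dvd
    · have dvd_D : (p : ℤ) ∣ D := by
        rw [← show x.2.1 ^ 2 - 4 * x.1 * x.2.2 = D from hx]
        exact dvd_sub (dvd_pow hx_dvd.2.1 two_ne_zero) (hx_dvd.2.2.mul_left _)
      rw [projRootCount_of_dvd hx_dvd.1 hx_dvd.2.1 hx_dvd.2.2, legSym, if_pos dvd_D]
      push_cast
      ring
    · rw [projRootCount_eq_one_add_legSym hp hx hx_dvd, mul_zero, add_zero]
  · have dvd_disc : (p : ℤ) ∣ D * p ^ 2 := (dvd_pow_self _ two_ne_zero).mul_left D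
    have not_first : q ∉ (fun x : ℤ × ℤ × ℤ => (p : ℤ) • x) '' QD D := fun h =>
      hdvd ((mem_image_smul_iff hp0).mp h).2
    have not_second : q ∉ (fun x : ℤ × ℤ × ℤ => (p : ℤ) • (p : ℤ) • x) ''
        ((fun x => (p : ℤ) • x) ⁻¹' QD D) := by
      rintro ⟨x, hx, rfl⟩
      exact not_first ⟨_, hx, rfl⟩
    rw [heckeMult_of_not_dvd hp hD4 hq hdvd, projRootCount_eq_one_add_legSym hp hq hdvd,
      legSym, if_pos dvd_disc, if_neg not_first, if_neg not_second, mul_zero, mul_zero, add_zero,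
      add_zero]

end Multiplicity

section HeckeSum

theorem tsum_comp_eq_tsum_indicator {α β E : Type*} [AddCommMonoid E] [TopologicalSpace E]
    {φ : α → β} (hφ : Function.Injective φ) {S : Set α} {T : Set β} (hST : Set.MapsTo φ S T)
    (H : β → E) : ∑' x : S, H (φ x) = ∑' y : T, (φ '' S).indicator H y :=
  calc ∑' x : S, H (φ x) = ∑' y : φ '' S, H y := (tsum_image H hφ.injOn).symm
    _ = ∑' y, T.indicator ((φ '' S).indicator H) y := by
        rw [tsum_subtype, Set.indicator_indicator, Set.inter_eq_right.mpr hST.image_subset]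
    _ = ∑' y : T, (φ '' S).indicator H y := (tsum_subtype _ _).symm

theorem summable_subtype_indicator {β E : Type*} [NormedAddCommGroup E] [CompleteSpace E]
    {T : Set β} {H : β → E} (hH : Summable fun y : T => H y) (U : Set β) :
    Summable fun y : T => U.indicator H y :=
  hH.indicator (Subtype.val ⁻¹' U)

variable {p : ℕ} {D : ℤ} {H : ℤ × ℤ × ℤ → ℂ}

theorem tsum_upperSubst_eq_tsum_heckeMult (hp : p ≠ 0)
    (hH : Summable fun q : QD (D * p ^ 2) => H q) :
    (∑' q : QD D, H (upperSubst p 0 1 q)) +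
        ∑ r ∈ Finset.range p, ∑' q : QD D, H (upperSubst 1 r p q) =
      ∑' q : QD (D * p ^ 2), (heckeMult D p q : ℂ) * H q := by
  classical
  have hp0 : (p : ℤ) ≠ 0 := Int.natCast_ne_zero.mpr hp
  have dilation := tsum_comp_eq_tsum_indicator (upperSubst_injective hp0 0 one_ne_zero)
    (fun q hq => ((mem_image_upperSubst_dilation_iff hp0).mp ⟨q, hq, rfl⟩).1) H (S := QD D)
  have translation (r : ℕ) := tsum_comp_eq_tsum_indicator (upperSubst_injective one_ne_zero r hp0)
    (fun q hq => ((mem_image_upperSubst_translation_iff hp0 r).mp ⟨q, hq, rfl⟩).1) H (S := QD D)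
  simp only [dilation, translation]
  rw [← Summable.tsum_finsetSum fun r _ => summable_subtype_indicator hH _,
    ← (summable_subtype_indicator hH _).tsum_add
      (summable_sum fun r _ => summable_subtype_indicator hH _)]
  refine tsum_congr fun q => ?_
  simp only [heckeMult, Finset.card_filter, Set.indicator_apply]
  push_cast
  simp only [add_mul, Finset.sum_mul, ite_mul, one_mul, zero_mul]

theorem tsum_heckeMult (hp : p.Prime) (hD4 : D % 4 = 0 ∨ D % 4 = 1)
    (hH : Summable fun q : QD (D * p ^ 2) => H q) :
    ∑' q : QD (D * p ^ 2), (heckeMult D p q : ℂ) * H q =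
      ∑' q : QD (D * p ^ 2), H q + legSym D p * ∑' q : QD D, H ((p : ℤ) • (q : ℤ × ℤ × ℤ)) +
        p * ∑' q : (fun q : ℤ × ℤ × ℤ => (p : ℤ) • q) ⁻¹' QD D,
          H ((p : ℤ) • (p : ℤ) • (q : ℤ × ℤ × ℤ)) := by
  classical
  have hp0 : (p : ℤ) ≠ 0 := Int.natCast_ne_zero.mpr hp.ne_zero
  have smul_inj : Function.Injective fun q : ℤ × ℤ × ℤ => (p : ℤ) • q :=
    smul_right_injective _ hp0
  have once := tsum_comp_eq_tsum_indicator smul_inj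
    (fun q hq => (smul_mem_QD_iff hp0).mpr hq) H (S := QD D) (T := QD (D * p ^ 2))
  have twice := tsum_comp_eq_tsum_indicator (smul_inj.comp smul_inj)
    (fun q hq => (smul_mem_QD_iff hp0).mpr hq) H (S := (fun q => (p : ℤ) • q) ⁻¹' QD D)
    (T := QD (D * p ^ 2))
  simp only [Function.comp_def] at once twice
  rw [once, twice, ← tsum_mul_left, ← tsum_mul_left,
    ← hH.tsum_add ((summable_subtype_indicator hH _).mul_left _),
    ← (hH.add ((summable_subtype_indicator hH _).mul_left _)).tsum_add
      ((summable_subtype_indicator hH _).mul_left _)]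
  refine tsum_congr fun q => ?_
  have mult : (heckeMult D p q : ℂ) = ((heckeMult D p q : ℤ) : ℂ) := by push_cast; rfl
  rw [mult, heckeMult_eq hp hD4 q.2]
  simp only [Set.indicator_apply]
  split_ifs <;> push_cast <;> ring

theorem tsum_upperSubst (hp : p.Prime) (hD4 : D % 4 = 0 ∨ D % 4 = 1)
    (hH : Summable fun q : QD (D * p ^ 2) => H q) :
    (∑' q : QD D, H (upperSubst p 0 1 q)) +
        ∑ r ∈ Finset.range p, ∑' q : QD D, H (upperSubst 1 r p q) =
      ∑' q : QD (D * p ^ 2), H q + legSym D p * ∑' q : QD D, H ((p : ℤ) • (q : ℤ × ℤ × ℤ)) +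
        p * ∑' q : (fun q : ℤ × ℤ × ℤ => (p : ℤ) • q) ⁻¹' QD D,
          H ((p : ℤ) • (p : ℤ) • (q : ℤ × ℤ × ℤ)) :=
  (tsum_upperSubst_eq_tsum_heckeMult hp.ne_zero hH).trans (tsum_heckeMult hp hD4 hH)

end HeckeSum

section Covariance

variable {k : ℕ} {D E : ℤ} {τ σ : ℂ} {q q' : ℤ × ℤ × ℤ}

theorem Fsummand_eq_pow_mul {t : ℝ} (ht : 0 < t) (hval : Qval q σ = t * Qval q' τ)
    (hell : Qell q σ = t * Qell q' τ) (him : D * σ.im ^ 2 = t ^ 2 * (E * τ.im ^ 2)) :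
    Fsummand k D σ q = t ^ (k - 1) * Fsummand k E τ q' := by
  have sign_eq : Real.sign (t * Qell q' τ) = Real.sign (Qell q' τ) := by
    simp only [Real.sign, mul_pos_iff_of_pos_left ht, mul_neg_iff, ht,
      ht.not_gt, true_and, false_and, or_false]
  rw [Fsummand, Fsummand, hval, hell, him, sign_eq, Complex.normSq_mul, Complex.normSq_ofReal,
    mul_pow, ← pow_two, mul_div_mul_left _ _ (pow_ne_zero 2 ht.ne')]
  ring

theorem Fsummand_upperSubst {α β δ : ℤ} (hδ : δ ≠ 0) (k : ℕ) (D : ℤ) (τ : ℂ) (q : ℤ × ℤ × ℤ) :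
    Fsummand k D ((α * τ + β) / δ) q =
      ((δ : ℂ) ^ 2)⁻¹ ^ (k - 1) * Fsummand k (D * (α * δ) ^ 2) τ (upperSubst α β δ q) := by
  have hδ0 : (δ : ℝ) ≠ 0 := Int.cast_ne_zero.mpr hδ
  have hδC : (δ : ℂ) ≠ 0 := Int.cast_ne_zero.mpr hδ
  have re_eq : ((α * τ + β) / δ).re = (α * τ.re + β) / δ := by simp [Complex.div_intCast_re]
  have im_eq : ((α * τ + β) / δ).im = α * τ.im / δ := by simp [Complex.div_intCast_im]
  have scale := Fsummand_eq_pow_mul (k := k) (D := D) (E := D * (α * δ) ^ 2)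
    (σ := (α * τ + β) / δ) (τ := τ) (q := q) (q' := upperSubst α β δ q)
    (inv_pos.mpr (sq_pos_of_ne_zero hδ0))
    (by simp only [Qval, upperSubst]; push_cast; field_simp; ring)
    (by simp only [Qell, upperSubst, Complex.normSq_apply, re_eq, im_eq]; push_cast
        field_simp; ring)
    (by rw [im_eq]; push_cast; field_simp)
  rw [scale]
  push_cast
  rfl

theorem Fsummand_smul {m : ℕ} (hm : 0 < m) (k : ℕ) (D : ℤ) (τ : ℂ) (q : ℤ × ℤ × ℤ) :
    Fsummand k (D * m ^ 2) τ ((m : ℤ) • q) = (m : ℂ) ^ (k - 1) * Fsummand k D τ q := by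
  have scale := Fsummand_eq_pow_mul (k := k) (D := D * m ^ 2) (E := D) (σ := τ) (τ := τ)
    (q := (m : ℤ) • q) (q' := q) (Nat.cast_pos.mpr hm)
    (by simp only [Qval, Prod.smul_fst, Prod.smul_snd, smul_eq_mul]; push_cast; ring)
    (by simp only [Qell, Prod.smul_fst, Prod.smul_snd, smul_eq_mul]; push_cast; ring)
    (by push_cast; ring)
  exact_mod_cast scale

theorem Dpow_mul_sq (hD : 0 ≤ D) (m k : ℕ) :
    Dpow (D * m ^ 2) (1 / 2 - k) = (m : ℂ) ^ (1 - 2 * k : ℤ) * Dpow D (1 / 2 - k) := by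
  have hD0 : (0 : ℝ) ≤ D := Int.cast_nonneg hD
  have sq_rpow : ((m : ℝ) ^ 2) ^ (1 / 2 - k : ℝ) = (m : ℝ) ^ (1 - 2 * k : ℤ) := by
    rw [← Real.rpow_natCast_mul m.cast_nonneg, ← Real.rpow_intCast]
    congr 1
    push_cast
    ring
  simp only [Dpow]
  push_cast
  rw [Real.mul_rpow hD0 (sq_nonneg _), sq_rpow, mul_comm]
  push_cast
  rfl

/-- The contribution of the form `q` to the series `F k D τ`, normalizing factor included. -/
noncomputable def Fterm (k : ℕ) (D : ℤ) (τ : ℂ) (q : ℤ × ℤ × ℤ) : ℂ :=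
  Dpow D (1 / 2 - (k : ℝ)) / (((Nat.choose (2 * k - 2) (k - 1) : ℝ) * Real.pi : ℝ) : ℂ) *
    Fsummand k D τ q

theorem F_eq_tsum_Fterm (k : ℕ) (D : ℤ) (τ : ℂ) : F k D τ = ∑' q : QD D, Fterm k D τ q :=
  tsum_mul_left.symm

theorem Fterm_upperSubst (hk : 1 ≤ k) (hD : 0 ≤ D) (α : ℕ) {δ : ℕ} (hδ : δ ≠ 0) (β : ℤ)
    (τ : ℂ) (q : ℤ × ℤ × ℤ) : Fterm k (D * (α * δ) ^ 2) τ (upperSubst α β δ q) =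
      (α : ℂ) ^ (1 - 2 * k : ℤ) * (δ : ℂ)⁻¹ * Fterm k D ((α * τ + β) / δ) q := by
  have norm := Dpow_mul_sq hD (α * δ) k
  have subst := Fsummand_upperSubst (α := α) (β := β) (Int.natCast_ne_zero.mpr hδ) k D τ q
  have δ_pow : (δ : ℂ) ^ (1 - 2 * k : ℤ) = (δ : ℂ)⁻¹ * ((δ : ℂ) ^ 2)⁻¹ ^ (k - 1) := by
    rw [show (1 - 2 * k : ℤ) = -1 + -(2 * (k - 1) : ℕ) by push_cast [hk]; ring,
      zpow_add₀ (Nat.cast_ne_zero.mpr hδ), zpow_neg_one, zpow_neg, zpow_natCast, pow_mul, inv_pow]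
  push_cast at norm subst
  rw [Fterm, Fterm, norm, subst, mul_zpow, δ_pow]
  ring

theorem Fterm_smul (hk : 1 ≤ k) (hD : 0 ≤ D) {m : ℕ} (hm : 0 < m) (τ : ℂ) (q : ℤ × ℤ × ℤ) :
    Fterm k (D * m ^ 2) τ ((m : ℤ) • q) = (m : ℂ) ^ (-k : ℤ) * Fterm k D τ q := by
  have m_pow : (m : ℂ) ^ (1 - 2 * k : ℤ) * (m : ℂ) ^ (k - 1) = (m : ℂ) ^ (-k : ℤ) := by
    rw [← zpow_natCast, ← zpow_add₀ (Nat.cast_ne_zero.mpr hm.ne')]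
    congr 1
    push_cast [hk]
    ring
  rw [Fterm, Fterm, Dpow_mul_sq hD, Fsummand_smul hm, ← m_pow]
  ring

theorem summable_Fterm (hk : 2 ≤ k) (hD : 0 < D) (hDsq : ¬∃ m : ℤ, m ^ 2 = D) (hτ : 0 < τ.im) :
    Summable fun q : QD D => Fterm k D τ q :=
  (summable_Fsummand hk hD hDsq hτ).mul_left _

end Covariance

section Hecke

variable {k p : ℕ} {D : ℤ}

theorem heckeT_F_eq (hk : 1 ≤ k) (hD : 0 ≤ D) (hp : p ≠ 0) (τ : ℂ) :
    heckeT k p (F k D) τ =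
      (∑' q : QD D, Fterm k (D * p ^ 2) τ (upperSubst p 0 1 q)) +
        ∑ r ∈ Finset.range p, ∑' q : QD D, Fterm k (D * p ^ 2) τ (upperSubst 1 r p q) := by
  have dilation (q : ℤ × ℤ × ℤ) : Fterm k (D * p ^ 2) τ (upperSubst p 0 1 q) =
      (p : ℂ) ^ (1 - 2 * k : ℤ) * Fterm k D (p * τ) q := by
    simpa using Fterm_upperSubst hk hD p one_ne_zero 0 τ q
  have translation (r : ℕ) (q : ℤ × ℤ × ℤ) : Fterm k (D * p ^ 2) τ (upperSubst 1 r p q) =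
      (p : ℂ)⁻¹ * Fterm k D ((τ + r) / p) q := by
    simpa using Fterm_upperSubst hk hD 1 hp r τ q
  simp only [heckeT, F_eq_tsum_Fterm, dilation, translation, tsum_mul_left, Finset.mul_sum]

theorem tsum_Fterm_smul (hk : 1 ≤ k) (hD : 0 ≤ D) (hp : 0 < p) (τ : ℂ) :
    ∑' q : QD D, Fterm k (D * p ^ 2) τ ((p : ℤ) • (q : ℤ × ℤ × ℤ)) =
      (p : ℂ) ^ (-k : ℤ) * F k D τ := by
  simp only [Fterm_smul hk hD hp, tsum_mul_left, F_eq_tsum_Fterm]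

theorem sq_dvd_of_smul_mem_QD {m : ℤ} {q : ℤ × ℤ × ℤ} (h : m • q ∈ QD D) : m ^ 2 ∣ D :=
  ⟨q.2.1 ^ 2 - 4 * q.1 * q.2.2, by
    rw [← show (m * q.2.1) ^ 2 - 4 * (m * q.1) * (m * q.2.2) = D from h]; ring⟩

theorem tsum_Fterm_smul_smul (hk : 1 ≤ k) (hD : 0 ≤ D) (hp : 0 < p) (τ : ℂ) :
    p * ∑' q : (fun q : ℤ × ℤ × ℤ => (p : ℤ) • q) ⁻¹' QD D,
        Fterm k (D * p ^ 2) τ ((p : ℤ) • (p : ℤ) • (q : ℤ × ℤ × ℤ)) =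
      (p : ℂ) ^ (1 - 2 * k : ℤ) * (if (p : ℤ) ^ 2 ∣ D then F k (D / p ^ 2) τ else 0) := by
  have hp0 : (p : ℤ) ≠ 0 := Int.natCast_ne_zero.mpr hp.ne'
  have hpC : (p : ℂ) ≠ 0 := Nat.cast_ne_zero.mpr hp.ne'
  have p_pow : (p : ℂ) ^ (1 - 2 * k : ℤ) = p * ((p : ℂ) ^ (-k : ℤ) * (p : ℂ) ^ (-k : ℤ)) := by
    rw [← zpow_add₀ hpC, ← zpow_one_add₀ hpC]
    congr 1
    ring
  simp only [Fterm_smul hk hD hp, tsum_mul_left]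
  split_ifs with hdvd
  · obtain ⟨E, rfl⟩ := exists_eq_mul_left_of_dvd hdvd
    have hE : 0 ≤ E := nonneg_of_mul_nonneg_left hD (by positivity)
    have preimage_eq : (fun q : ℤ × ℤ × ℤ => (p : ℤ) • q) ⁻¹' QD (E * p ^ 2) = QD E :=
      Set.ext fun q => smul_mem_QD_iff hp0
    rw [preimage_eq, tsum_Fterm_smul hk hE hp, Int.mul_ediv_cancel _ (pow_ne_zero 2 hp0), p_pow]
    ring
  · have preimage_eq : (fun q : ℤ × ℤ × ℤ => (p : ℤ) • q) ⁻¹' QD D = ∅ :=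
      Set.eq_empty_of_forall_notMem fun q hq => hdvd (sq_dvd_of_smul_mem_QD hq)
    rw [preimage_eq, tsum_empty, mul_zero, mul_zero, mul_zero]

theorem not_exists_sq_eq_mul_sq {m : ℤ} (hm : m ≠ 0) (hD : ¬∃ n : ℤ, n ^ 2 = D) :
    ¬∃ n : ℤ, n ^ 2 = D * m ^ 2 := by
  rintro ⟨n, hn⟩
  obtain ⟨l, rfl⟩ := (Int.pow_dvd_pow_iff two_ne_zero).mp (Dvd.intro_left D hn.symm)
  exact hD ⟨l, mul_right_cancel₀ (pow_ne_zero 2 hm) (by rw [← hn]; ring)⟩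

end Hecke

theorem stmt14 (k : ℕ) (hk : 2 ≤ k) (D : ℤ) (hD : 0 < D)
    (hD4 : D % 4 = 0 ∨ D % 4 = 1) (hDsq : ¬∃ m : ℤ, m ^ 2 = D)
    (p : ℕ) (hp : p.Prime) (τ : ℂ) (hτ : 0 < τ.im) :
    heckeT k p (F k D) τ =
      F k (D * (p : ℤ) ^ 2) τ + (p : ℂ) ^ (-(k : ℤ)) * ((legSym D p : ℤ) : ℂ) * F k D τ +
        (p : ℂ) ^ ((1 : ℤ) - 2 * (k : ℤ)) *
          (if ((p : ℤ) ^ 2 ∣ D) then F k (D / (p : ℤ) ^ 2) τ else 0) := by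
  have hk1 : 1 ≤ k := one_le_two.trans hk
  have hp0 : (p : ℤ) ≠ 0 := Int.natCast_ne_zero.mpr hp.ne_zero
  have summable : Summable fun q : QD (D * p ^ 2) => Fterm k (D * p ^ 2) τ q :=
    summable_Fterm hk (by positivity) (not_exists_sq_eq_mul_sq hp0 hDsq) hτ
  rw [heckeT_F_eq hk1 hD.le hp.ne_zero, tsum_upperSubst hp hD4 summable, ← F_eq_tsum_Fterm,
    tsum_Fterm_smul hk1 hD.le hp.pos, tsum_Fterm_smul_smul hk1 hD.le hp.pos]
  ring
end
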